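/- arXiv:1111.6782 — 2 statements merged into one kernel-verified Lean document; each statement's English description precedes it below -/
import Mathlib

section
/- Let α ∈ (2,3), λ > 0, n ≥ 2, and let γ ∈ H^{(α+1)/2,2}(ℝ/ℤ,ℝⁿ) be injective, parametrized by arc-length, and a stationary point of E^α + λL, i.e. δE^α(γ;h) + λ∫_{ℝ/ℤ} ⟨γ'(u),h'(u)⟩ du = 0 for all h ∈ H^{(1+α)/2,2}(ℝ/ℤ,ℝⁿ). Then γ ∈ H^{α−1/2−ε,2}(ℝ/ℤ,ℝⁿ) for every ε > 0. -/
open MeasureTheory Filter Set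
open scoped RealInnerProductSpace ENNReal Topology

noncomputable section

/-- `ℝⁿ` -/
abbrev Rn (n : ℕ) := EuclideanSpace ℝ (Fin n)

variable {n : ℕ}

/-- A 1-periodic curve is injective as a map on `ℝ/ℤ`. -/
def PerInjective (γ : ℝ → Rn n) : Prop :=
  ∀ u v : ℝ, γ u = γ v → ∃ k : ℤ, v = u + k

/-- `γ` is a regular curve: `γ'(u) ≠ 0` for all `u`. -/
def RegularCurve (γ : ℝ → Rn n) : Prop := ∀ u : ℝ, deriv γ u ≠ 0

/-- `γ` is parametrized by arc-length: `|γ'(u)| = 1` for all `u`. -/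
def ArcLengthParam (γ : ℝ → Rn n) : Prop := ∀ u : ℝ, ‖deriv γ u‖ = 1

/-- The length `L(γ) = ∫₀¹ |γ'(θ)| dθ` of the closed curve `γ`. -/
def curveLen (γ : ℝ → Rn n) : ℝ := ∫ θ in (0:ℝ)..1, ‖deriv γ θ‖

/-- The arc length `L(γ|_{[u,u+w]}) = |∫_u^{u+w} |γ'(θ)| dθ|`. -/
def arcLen (γ : ℝ → Rn n) (u w : ℝ) : ℝ := |∫ θ in u..(u + w), ‖deriv γ θ‖|

/-- The intrinsic distance `d_γ(u+w,u)`. -/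
def idist (γ : ℝ → Rn n) (u w : ℝ) : ℝ :=
  min (arcLen γ u w) (curveLen γ - arcLen γ u w)

/-- The integrand of the O'Hara energy `E^α`. -/
def ohIntegrand (α : ℝ) (γ : ℝ → Rn n) (u w : ℝ) : ℝ :=
  (1 / ‖γ (u + w) - γ u‖ ^ α - 1 / idist γ u w ^ α) * ‖deriv γ (u + w)‖ * ‖deriv γ u‖

/-- The O'Hara energy `E^α`, with values in `[0,∞]`. -/
def oharaE (α : ℝ) (γ : ℝ → Rn n) : ℝ≥0∞ :=
  ∫⁻ u in Ioc (0:ℝ) 1, ∫⁻ w in Ioo (-(1:ℝ)/2) (1/2), ENNReal.ofReal (ohIntegrand α γ u w)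

/-- The O'Hara energy `E^α` as a real number. -/
def oharaER (α : ℝ) (γ : ℝ → Rn n) : ℝ := (oharaE α γ).toReal

/-- `[−1/2,−ε] ∪ [ε,1/2]`, the `w`-section of `U_ε`. -/
def Wset (ε : ℝ) : Set ℝ := Icc (-(1:ℝ)/2) (-ε) ∪ Icc ε (1/2)

/-- The truncated O'Hara energy `E^α_ε`, an integral over `U_ε`. -/
def oharaEeps (α ε : ℝ) (γ : ℝ → Rn n) : ℝ :=
  ∫ u in Ioc (0:ℝ) 1, ∫ w in Wset ε, ohIntegrand α γ u w

/-- `F` has directional (Gâteaux) derivative `d` at `γ` in direction `h`. -/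
def HasDirDeriv (F : (ℝ → Rn n) → ℝ) (γ h : ℝ → Rn n) (d : ℝ) : Prop :=
  Tendsto (fun τ : ℝ => (F (γ + τ • h) - F γ) / τ) (𝓝[≠] (0:ℝ)) (𝓝 d)

/-- Squared Gagliardo seminorm `[f]²_{H^{s,2}}` of a 1-periodic map. -/
def gagliardoSq (s : ℝ) {E : Type*} [NormedAddCommGroup E] (f : ℝ → E) : ℝ≥0∞ :=
  ∫⁻ u in Ioc (0:ℝ) 1, ∫⁻ w in Ioo (-(1:ℝ)/2) (1/2),
    ENNReal.ofReal (‖f (u + w) - f u‖ ^ 2 / |w| ^ (1 + 2 * s))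

/-- Membership in the fractional Sobolev space `H^{1+σ,2}(ℝ/ℤ,ℝⁿ)`, `σ ∈ (0,1)`:
a 1-periodic `C¹` function whose derivative has finite Gagliardo seminorm of order `σ`. -/
def MemH1 (σ : ℝ) (γ : ℝ → Rn n) : Prop :=
  Function.Periodic γ 1 ∧ ContDiff ℝ 1 γ ∧ gagliardoSq σ (deriv γ) < ⊤

/-- The norm of `H^{1+σ,2}(ℝ/ℤ,ℝⁿ)`. -/
def H1Norm (σ : ℝ) (γ : ℝ → Rn n) : ℝ :=
  Real.sqrt (∫ u in Ioc (0:ℝ) 1, (‖γ u‖ ^ 2 + ‖deriv γ u‖ ^ 2)) +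
    Real.sqrt ((gagliardoSq σ (deriv γ)).toReal)

/-- Membership of a 1-periodic map in `L²(ℝ/ℤ)`. -/
def MemL2per {E : Type*} [NormedAddCommGroup E] (f : ℝ → E) : Prop :=
  Function.Periodic f 1 ∧ AEStronglyMeasurable f (volume : Measure ℝ) ∧
    IntegrableOn (fun u => ‖f u‖ ^ 2) (Ioc (0:ℝ) 1) volume

/-- Membership in the fractional Sobolev space `H^{s,2}(ℝ/ℤ)`, `s ∈ (0,1)`. -/
def MemHs0 (s : ℝ) {E : Type*} [NormedAddCommGroup E] (f : ℝ → E) : Prop :=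
  MemL2per f ∧ gagliardoSq s f < ⊤

/-- The norm of `H^{s,2}(ℝ/ℤ)` for `s ∈ (0,1)`: `‖f‖_{L²} + [f]_{H^{s,2}}`. -/
def Hs0Norm (s : ℝ) {E : Type*} [NormedAddCommGroup E] (f : ℝ → E) : ℝ :=
  Real.sqrt (∫ u in Ioc (0:ℝ) 1, ‖f u‖ ^ 2) + Real.sqrt ((gagliardoSq s f).toReal)

/-- The `k`-th Fourier coefficient (`j`-th component) of a 1-periodic curve. -/
def fCoef (γ : ℝ → Rn n) (k : ℤ) (j : Fin n) : ℂ :=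
  ∫ u in (0:ℝ)..1, (γ u j : ℂ) * Complex.exp ((-2) * (Real.pi : ℂ) * Complex.I * (k : ℂ) * (u : ℂ))

/-- Membership in `H^{s,2}(ℝ/ℤ,ℝⁿ)` via the Fourier characterization:
`((1+|k|²)^{s/2} γ̂(k))_k ∈ ℓ²`. -/
def MemHF (s : ℝ) (γ : ℝ → Rn n) : Prop :=
  Function.Periodic γ 1 ∧ Continuous γ ∧
    Summable (fun k : ℤ => (1 + (k : ℝ) ^ 2) ^ s * ∑ j, ‖fCoef γ k j‖ ^ 2)

/-- The squared Fourier norm of `H^{s,2}(ℝ/ℤ,ℝⁿ)`. -/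
def fNormSq (s : ℝ) (γ : ℝ → Rn n) : ℝ :=
  ∑' k : ℤ, (1 + (k : ℝ) ^ 2) ^ s * ∑ j, ‖fCoef γ k j‖ ^ 2

/-- C¹-norm of a 1-periodic map. -/
def c1Norm (f : ℝ → Rn n) : ℝ := ⨆ u : Icc (0:ℝ) 1, (‖f u.1‖ + ‖deriv f u.1‖)

/-- The integrand of `Q(γ,h)`. -/
def Qintegrand (α : ℝ) (γ h : ℝ → Rn n) (u w : ℝ) : ℝ :=
  ⟪deriv γ u, deriv h u⟫ / |w| ^ α
    - ⟪γ (u + w) - γ u, h (u + w) - h u⟫ / |w| ^ (α + 2)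

/-- The integrand of `R(γ,h)`. -/
def Rintegrand (α : ℝ) (γ h : ℝ → Rn n) (u w : ℝ) : ℝ :=
  2 * ⟪deriv γ u, deriv h u⟫ * (1 / ‖γ (u + w) - γ u‖ ^ α - 1 / |w| ^ α)
    - α * ⟪γ (u + w) - γ u, h (u + w) - h u⟫ *
        (1 / ‖γ (u + w) - γ u‖ ^ (α + 2) - 1 / |w| ^ (α + 2))

/-- `R(γ,h)`, an absolutely convergent double integral over `(ℝ/ℤ) × [−1/2,1/2]`. -/
def Rval (α : ℝ) (γ h : ℝ → Rn n) : ℝ :=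
  ∫ p in (Ioc (0:ℝ) 1) ×ˢ (Icc (-(1:ℝ)/2) (1/2)), Rintegrand α γ h p.1 p.2

/-!
Test stationarity with the waves `h = cos (2πku + θ) • eⱼ`. To leading order the first variation
of `E^α` at an arc-length curve is `α` times a bilinear form which is diagonal in Fourier space,
with multiplier `∫ |w|^(-(α+2)) ((2πkw)² - 2 + 2 cos (2πkw)) dw ≳ |k|^(α+1)`; finiteness of this
form at `γ` itself is exactly `γ ∈ H^{(α+1)/2,2}`. The remainder of the first variation, like the
variation of length, is bounded by a constant times `‖h'‖_∞ ≲ |k|`. Hence `|γ̂(k)| ≲ |k|^(-α)`,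
which is membership in `H^{s,2}` for every `s < α - 1/2`.

No formula for the derivative of `E^α` is needed: since the derivative is assumed to exist, it is
squeezed between the one-sided estimates `E^α(γ + τh) - E^α(γ) ≤ τ α B(γ,h) + C |τ| ‖h'‖_∞ + O(τ²)`
for `τ > 0` and `τ < 0`.
-/

/-! ### Fourier coefficients of 1-periodic functions -/

local notation "𝓕" => fourierCoeffOn (zero_lt_one' ℝ)

lemma fourierCoeffOn_zero_one_eq_integral (F : ℝ → ℂ) (k : ℤ) :
    𝓕 F k = ∫ u in (0 : ℝ)..1, Complex.exp (-(2 * Real.pi * k * u : ℝ) * Complex.I) * F u := by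
  rw [fourierCoeffOn_eq_integral]
  simp only [sub_zero, div_one, one_smul, fourier_coe_apply, smul_eq_mul, Complex.ofReal_one]
  refine intervalIntegral.integral_congr fun u _ => ?_
  push_cast
  ring_nf

lemma fCoef_eq_fourierCoeffOn (γ : ℝ → Rn n) (k : ℤ) (j : Fin n) :
    fCoef γ k j = 𝓕 (fun u => (γ u j : ℂ)) k := by
  rw [fourierCoeffOn_zero_one_eq_integral, fCoef]
  refine intervalIntegral.integral_congr fun u _ => ?_
  push_cast
  ring_nf

lemma hasSum_sq_fourierCoeffOn_of_continuous {F : ℝ → ℂ} (hF : Continuous F) :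
    HasSum (fun k => ‖𝓕 F k‖ ^ 2) (∫ u in (0 : ℝ)..1, ‖F u‖ ^ 2) := by
  have hL : MemLp F 2 (volume.restrict (Ioc (0 : ℝ) 1)) := by
    rw [memLp_two_iff_integrable_sq_norm hF.aestronglyMeasurable]
    exact ((hF.norm.pow 2).intervalIntegrable 0 1).1
  simpa only [sub_zero, inv_one, one_smul] using hasSum_sq_fourierCoeffOn (zero_lt_one' ℝ) hL

lemma integral_comp_add_of_periodic {E : Type*} [NormedAddCommGroup E] [NormedSpace ℝ E]
    {f : ℝ → E} {T : ℝ} (hf : Function.Periodic f T) (w : ℝ) :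
    ∫ u in (0 : ℝ)..T, f (u + w) = ∫ u in (0 : ℝ)..T, f u := by
  rw [intervalIntegral.integral_comp_add_right, zero_add, add_comm T w,
    hf.intervalIntegral_add_eq w 0, zero_add]

lemma fourierCoeffOn_comp_add {F : ℝ → ℂ} (hP : Function.Periodic F 1) (w : ℝ) (k : ℤ) :
    𝓕 (fun u => F (u + w)) k = Complex.exp (Complex.I * (2 * Real.pi * k * w : ℝ)) * 𝓕 F k := by
  set g : ℝ → ℂ := fun u => Complex.exp (-(2 * Real.pi * k * u : ℝ) * Complex.I) * F u
  have hg : Function.Periodic g 1 := fun u => by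
    have hexp : Complex.exp (-(2 * Real.pi * k * (u + 1) : ℝ) * Complex.I) =
        Complex.exp (-(2 * Real.pi * k * u : ℝ) * Complex.I) :=
      Complex.exp_eq_exp_iff_exists_int.2 ⟨-k, by push_cast; ring⟩
    simp only [g, hP u, hexp]
  rw [fourierCoeffOn_zero_one_eq_integral, fourierCoeffOn_zero_one_eq_integral,
    ← integral_comp_add_of_periodic hg w, ← intervalIntegral.integral_const_mul]
  refine intervalIntegral.integral_congr fun u _ => ?_
  simp only [g]
  rw [← mul_assoc, ← Complex.exp_add]
  push_cast
  ring_nf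

lemma norm_sq_fourierCoeffOn_comp_add_sub {F : ℝ → ℂ} (hF : Continuous F)
    (hP : Function.Periodic F 1) (w : ℝ) (k : ℤ) :
    ‖𝓕 (fun u => F (u + w) - F u) k‖ ^ 2 =
      (2 - 2 * Real.cos (2 * Real.pi * k * w)) * ‖𝓕 F k‖ ^ 2 := by
  have hsub : 𝓕 (fun u => F (u + w) - F u) k = 𝓕 (fun u => F (u + w)) k - 𝓕 F k := by
    simp only [fourierCoeffOn_zero_one_eq_integral, mul_sub]
    exact intervalIntegral.integral_sub (Continuous.intervalIntegrable (by fun_prop) _ _)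
      (Continuous.intervalIntegrable (by fun_prop) _ _)
  rw [hsub, fourierCoeffOn_comp_add hP, ← sub_one_mul, norm_mul, mul_pow,
    Complex.norm_exp_I_mul_ofReal_sub_one, Real.norm_eq_abs, sq_abs, mul_pow,
    Real.sin_sq_eq_half_sub]
  ring_nf

lemma norm_fourierCoeffOn_deriv {F F' : ℝ → ℂ} (hd : ∀ u, HasDerivAt F (F' u) u)
    (hc : Continuous F') (hP : Function.Periodic F 1) (k : ℤ) :
    ‖𝓕 F' k‖ = 2 * Real.pi * |(k : ℝ)| * ‖𝓕 F k‖ := by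
  have hF01 : F 1 - F 0 = 0 := by rw [sub_eq_zero]; simpa using hP 0
  rcases eq_or_ne k 0 with rfl | hk
  · have hint : ∫ u in (0 : ℝ)..1, F' u = 0 := by
      rw [intervalIntegral.integral_eq_sub_of_hasDerivAt (fun u _ => hd u)
        (hc.intervalIntegrable _ _), hF01]
    simp [fourierCoeffOn_zero_one_eq_integral, hint]
  · rw [fourierCoeffOn_of_hasDerivAt (zero_lt_one' ℝ) hk (fun u _ => hd u)
      (hc.intervalIntegrable _ _), hF01]
    have hk' : |(k : ℝ)| ≠ 0 := abs_ne_zero.2 (Int.cast_ne_zero.2 hk)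
    simp [abs_of_pos Real.pi_pos]
    field_simp

lemma hasSum_integral_deriv_sq_sub_translation_sq {F F' : ℝ → ℂ}
    (hd : ∀ u, HasDerivAt F (F' u) u) (hc : Continuous F') (hP : Function.Periodic F 1) (w : ℝ) :
    HasSum (fun k : ℤ => ‖𝓕 F k‖ ^ 2 *
        ((2 * Real.pi * k * w) ^ 2 - 2 + 2 * Real.cos (2 * Real.pi * k * w)))
      (∫ u in (0 : ℝ)..1, (w ^ 2 * ‖F' u‖ ^ 2 - ‖F (u + w) - F u‖ ^ 2)) := by
  have hF : Continuous F := continuous_iff_continuousAt.2 fun u => (hd u).continuousAt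
  have hderiv := (hasSum_sq_fourierCoeffOn_of_continuous hc).mul_left (w ^ 2)
  have htrans := hasSum_sq_fourierCoeffOn_of_continuous
    (F := fun u => F (u + w) - F u) (by fun_prop)
  rw [intervalIntegral.integral_sub (Continuous.intervalIntegrable (by fun_prop) _ _)
    (Continuous.intervalIntegrable (by fun_prop) _ _), intervalIntegral.integral_const_mul]
  refine (hderiv.sub htrans).congr_fun fun k => ?_
  rw [norm_fourierCoeffOn_deriv hd hc hP, norm_sq_fourierCoeffOn_comp_add_sub hF hP]
  simp only [mul_pow, sq_abs]
  ring

lemma summable_norm_fourierCoeffOn {F : ℝ → ℂ} (hs : Summable fun k : ℤ => |(k : ℝ)| * ‖𝓕 F k‖) :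
    Summable fun k : ℤ => ‖𝓕 F k‖ := by
  refine Summable.of_norm_bounded_eventually hs ?_
  filter_upwards [(Set.finite_singleton (0 : ℤ)).compl_mem_cofinite] with k hk
  rw [norm_norm]
  exact le_mul_of_one_le_left (norm_nonneg _) (by exact_mod_cast Int.one_le_abs hk)

lemma hasSum_fourierCoeffOn_of_summable {F : ℝ → ℂ} (hF : Continuous F)
    (hP : Function.Periodic F 1) (hs : Summable fun k : ℤ => ‖𝓕 F k‖) (u : ℝ) :
    HasSum (fun k : ℤ => 𝓕 F k * fourier k (u : AddCircle (1 : ℝ))) (F u) := by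
  let G : C(AddCircle (1 : ℝ), ℂ) := ⟨hP.lift, continuous_coinduced_dom.mpr hF⟩
  have hG : fourierCoeff G = 𝓕 F := funext fun k => by
    rw [fourierCoeff_eq_intervalIntegral _ _ 0, fourierCoeffOn_eq_integral]
    simp only [zero_add, fourier_coe_apply, sub_zero]
    rfl
  have := has_pointwise_sum_fourier_series_of_summable (f := G) (hG ▸ hs.of_norm) u
  simp only [hG, smul_eq_mul] at this
  exact this

lemma contDiff_one_of_summable_fourierCoeffOn {F : ℝ → ℂ} (hF : Continuous F)
    (hP : Function.Periodic F 1) (hs : Summable fun k : ℤ => |(k : ℝ)| * ‖𝓕 F k‖) :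
    ContDiff ℝ 1 F := by
  set f' : ℤ → ℝ → ℂ := fun k u =>
    𝓕 F k * (2 * Real.pi * Complex.I * k / (1 : ℝ) * fourier k (u : AddCircle (1 : ℝ))) with hf'
  have hbound : ∀ k u, ‖f' k u‖ ≤ 2 * Real.pi * (|(k : ℝ)| * ‖𝓕 F k‖) := fun k u => by
    refine le_of_eq ?_
    simp only [hf', norm_mul, norm_div, fourier_apply, Circle.norm_coe, Complex.norm_I,
      Complex.norm_intCast, Complex.norm_real, Complex.norm_ofNat, norm_one,
      Real.norm_of_nonneg Real.pi_pos.le]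
    ring
  have hcont : ∀ k, Continuous (f' k) := fun k => by
    have : Continuous fun u : ℝ => fourier k (u : AddCircle (1 : ℝ)) :=
      (fourier k).continuous.comp (AddCircle.continuous_mk' 1)
    fun_prop
  have hsum := hasSum_fourierCoeffOn_of_summable hF hP (summable_norm_fourierCoeffOn hs)
  have hderiv : ∀ u, HasDerivAt F (∑' k, f' k u) u := fun u => by
    rw [show F = fun u : ℝ => ∑' k : ℤ, 𝓕 F k * fourier k (u : AddCircle (1 : ℝ)) from
      funext fun u => (hsum u).tsum_eq.symm]
    exact hasDerivAt_tsum (hs.mul_left _) (fun k u => (hasDerivAt_fourier 1 k u).const_mul _)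
      hbound (hsum 0).summable u
  refine contDiff_one_iff_deriv.2 ⟨fun u => (hderiv u).differentiableAt, ?_⟩
  rw [funext fun u => (hderiv u).deriv]
  exact continuous_tsum hcont (hs.mul_left _) hbound

/-! ### The Fourier multiplier of the leading variation -/

/-- The remainder in the second order Taylor expansion of `2 cos` at `0`. -/
def cosDefect (z : ℝ) : ℝ := z ^ 2 - 2 + 2 * Real.cos z

lemma measurable_cosDefect : Measurable cosDefect := by unfold cosDefect; fun_prop

lemma cosDefect_nonneg (z : ℝ) : 0 ≤ cosDefect z := by
  have := Real.one_sub_sq_div_two_le_cos (x := z)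
  unfold cosDefect; linarith

lemma cosDefect_pos {z : ℝ} (hz : z ≠ 0) : 0 < cosDefect z := by
  have := Real.one_sub_sq_div_two_lt_cos hz
  unfold cosDefect; linarith

lemma cosDefect_le_sq (z : ℝ) : cosDefect z ≤ z ^ 2 := by
  have := Real.cos_le_one z
  unfold cosDefect; linarith

lemma cosDefect_le_pow_four (z : ℝ) : cosDefect z ≤ z ^ 4 := by
  rcases le_or_gt |z| 1 with h | h
  · have hcos := (abs_le.1 (Real.cos_bound h)).2
    rw [show |z| ^ 4 = z ^ 4 from Even.pow_abs (by decide) z] at hcos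
    have : 0 ≤ z ^ 4 := by positivity
    unfold cosDefect; linarith
  · have hz : 1 ≤ z ^ 2 := (one_le_sq_iff_one_le_abs z).2 h.le
    nlinarith [cosDefect_le_sq z]

lemma cosDefect_abs (z : ℝ) : cosDefect |z| = cosDefect z := by
  unfold cosDefect; rw [sq_abs, Real.cos_abs]

/-- The kernel whose integral over `[-|k|/2, |k|/2]` is `|k| ^ (-(α + 1))` times the Fourier
multiplier `multiplier α k` of the leading variation. -/
def multiplierKernel (α s : ℝ) : ℝ := |s| ^ (-(α + 2)) * cosDefect (2 * Real.pi * s)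

lemma measurable_multiplierKernel (α : ℝ) : Measurable (multiplierKernel α) := by
  have := measurable_cosDefect
  unfold multiplierKernel
  fun_prop

lemma multiplierKernel_nonneg (α s : ℝ) : 0 ≤ multiplierKernel α s :=
  mul_nonneg (Real.rpow_nonneg (abs_nonneg _) _) (cosDefect_nonneg _)

lemma multiplierKernel_pos (α : ℝ) {s : ℝ} (hs : s ≠ 0) : 0 < multiplierKernel α s :=
  mul_pos (Real.rpow_pos_of_pos (abs_pos.2 hs) _)
    (cosDefect_pos (mul_ne_zero Real.two_pi_pos.ne' hs))

lemma multiplierKernel_abs (α s : ℝ) : multiplierKernel α |s| = multiplierKernel α s := by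
  unfold multiplierKernel
  rw [abs_abs, ← cosDefect_abs (2 * Real.pi * s), abs_mul, abs_of_pos Real.two_pi_pos]

lemma multiplierKernel_le_rpow_add_pow (α : ℝ) {s : ℝ} (hs : 0 < s) {m : ℕ}
    (hm : ∀ z, cosDefect z ≤ z ^ m) :
    multiplierKernel α s ≤ (2 * Real.pi) ^ m * s ^ (-(α + 2) + m) := by
  rw [multiplierKernel, abs_of_pos hs, Real.rpow_add_natCast hs.ne']
  calc s ^ (-(α + 2)) * cosDefect (2 * Real.pi * s)
      ≤ s ^ (-(α + 2)) * (2 * Real.pi * s) ^ m := by gcongr; exact hm _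
    _ = (2 * Real.pi) ^ m * (s ^ (-(α + 2)) * s ^ m) := by ring

lemma integrable_multiplierKernel {α : ℝ} (hα : α ∈ Ioo (1 : ℝ) 3) :
    Integrable (multiplierKernel α) := by
  have hdom : ∀ {S : Set ℝ} {m : ℕ}, MeasurableSet S → S ⊆ Ioi 0 → (∀ z, cosDefect z ≤ z ^ m) →
      IntegrableOn (fun s => s ^ (-(α + 2) + m)) S → IntegrableOn (multiplierKernel α) S :=
    fun {S m} hS hpos hm hint => by
      refine (hint.const_mul ((2 * Real.pi) ^ m)).mono'
        (measurable_multiplierKernel α).aestronglyMeasurable ?_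
      filter_upwards [ae_restrict_mem hS] with s hs
      rw [Real.norm_of_nonneg (multiplierKernel_nonneg α s)]
      exact multiplierKernel_le_rpow_add_pow α (hpos hs) hm
  have hIoi : IntegrableOn (multiplierKernel α) (Ioi 0) := by
    rw [← Ioc_union_Ioi_eq_Ioi zero_le_one]
    refine IntegrableOn.union
      (hdom measurableSet_Ioc Ioc_subset_Ioi_self cosDefect_le_pow_four ?_)
      (hdom measurableSet_Ioi (Ioi_subset_Ioi zero_le_one) cosDefect_le_sq ?_)
    · exact (intervalIntegral.intervalIntegrable_rpow' (by push_cast; linarith [hα.2])).1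
    · exact integrableOn_Ioi_rpow_of_lt (by push_cast; linarith [hα.1]) one_pos
  simpa only [Real.norm_eq_abs, multiplierKernel_abs] using
    (integrable_fun_norm_addHaar volume (E := ℝ) (f := multiplierKernel α)).2 (by simpa using hIoi)

/-- The Fourier multiplier of the leading variation: for `h = cos (2πk · + θ) e_j`, the leading
variation of `γ` in direction `h` is this number times the corresponding Fourier coefficient of
the `j`-th component of `γ`. -/
def multiplier (α k : ℝ) : ℝ :=
  ∫ w in Ioo (-(1 : ℝ) / 2) (1 / 2), |w| ^ (-(α + 2)) * cosDefect (2 * Real.pi * k * w)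

lemma rpow_mul_cosDefect_eq (α : ℝ) {k : ℝ} (hk : k ≠ 0) (w : ℝ) :
    |w| ^ (-(α + 2)) * cosDefect (2 * Real.pi * k * w) =
      |k| ^ (α + 2) * multiplierKernel α (|k| * w) := by
  have hk' : 0 < |k| := abs_pos.2 hk
  have hcos : cosDefect (2 * Real.pi * (|k| * w)) = cosDefect (2 * Real.pi * k * w) := by
    rw [← cosDefect_abs, ← cosDefect_abs (2 * Real.pi * k * w)]
    simp only [abs_mul, abs_abs, mul_assoc]
  rw [multiplierKernel, hcos, abs_mul, abs_abs, Real.mul_rpow hk'.le (abs_nonneg _),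
    ← mul_assoc, ← mul_assoc, ← Real.rpow_add hk', add_neg_cancel, Real.rpow_zero, one_mul]

lemma integrable_rpow_mul_cosDefect {α : ℝ} (hα : α ∈ Ioo (1 : ℝ) 3) (k : ℝ) :
    Integrable fun w => |w| ^ (-(α + 2)) * cosDefect (2 * Real.pi * k * w) := by
  rcases eq_or_ne k 0 with rfl | hk
  · simp [cosDefect]
  · simp only [rpow_mul_cosDefect_eq α hk]
    exact ((integrable_multiplierKernel hα).comp_mul_left' (abs_ne_zero.2 hk)).const_mul _

lemma multiplier_eq (α : ℝ) {k : ℝ} (hk : k ≠ 0) :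
    multiplier α k =
      (∫ s in (-(|k| / 2))..(|k| / 2), multiplierKernel α s) * |k| ^ (α + 1) := by
  have hk' : |k| ≠ 0 := abs_ne_zero.2 hk
  unfold multiplier
  simp only [rpow_mul_cosDefect_eq α hk]
  rw [← integral_Ioc_eq_integral_Ioo, ← intervalIntegral.integral_of_le (by norm_num),
    intervalIntegral.integral_const_mul, intervalIntegral.integral_comp_mul_left _ hk',
    show |k| * (-1 / 2) = -(|k| / 2) by ring, show |k| * (1 / 2) = |k| / 2 by ring,
    show α + 2 = (α + 1) + 1 by ring, Real.rpow_add_one hk', smul_eq_mul]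
  field_simp

lemma multiplier_nonneg (α k : ℝ) : 0 ≤ multiplier α k :=
  integral_nonneg fun _ => mul_nonneg (Real.rpow_nonneg (abs_nonneg _) _) (cosDefect_nonneg _)

lemma multiplier_le {α : ℝ} (hα : α ∈ Ioo (1 : ℝ) 3) (k : ℝ) :
    multiplier α k ≤ (∫ s, multiplierKernel α s) * |k| ^ (α + 1) := by
  rcases eq_or_ne k 0 with rfl | hk
  · simp [multiplier, cosDefect, Real.zero_rpow (show α + 1 ≠ 0 by linarith [hα.1])]
  · rw [multiplier_eq α hk, intervalIntegral.integral_of_le (by linarith [abs_nonneg k])]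
    exact mul_le_mul_of_nonneg_right (setIntegral_le_integral (integrable_multiplierKernel hα)
      (ae_of_all _ (multiplierKernel_nonneg α))) (by positivity)

lemma exists_mul_rpow_le_multiplier {α : ℝ} (hα : α ∈ Ioo (1 : ℝ) 3) :
    ∃ c > 0, ∀ k : ℝ, 1 ≤ |k| → c * |k| ^ (α + 1) ≤ multiplier α k := by
  have hint := integrable_multiplierKernel hα
  refine ⟨∫ s in (0 : ℝ)..(1 / 2), multiplierKernel α s, ?_, fun k hk => ?_⟩
  · exact intervalIntegral.intervalIntegral_pos_of_pos_on hint.intervalIntegrable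
      (fun s hs => multiplierKernel_pos α hs.1.ne') (by norm_num)
  · rw [multiplier_eq α (abs_pos.1 (one_pos.trans_le hk))]
    gcongr
    exact intervalIntegral.integral_mono_interval (by linarith) (by norm_num) (by linarith)
      (ae_of_all _ (multiplierKernel_nonneg α)) hint.intervalIntegrable

/-! ### Regularity from decay of Fourier coefficients -/

lemma summable_of_le_abs_rpow {f : ℤ → ℝ} {b C : ℝ} (hb : 1 < b) (hf : ∀ k, 0 ≤ f k)
    (h : ∀ k ≠ 0, f k ≤ C * |(k : ℝ)| ^ (-b)) : Summable f := by
  refine Summable.of_norm_bounded_eventually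
    ((Real.summable_abs_int_rpow hb).mul_left C) ?_
  filter_upwards [(Set.finite_singleton (0 : ℤ)).compl_mem_cofinite] with k hk
  rw [Real.norm_of_nonneg (hf k)]
  exact h k hk

lemma abs_rpow_two_mul_le (x : ℝ) {q : ℝ} (hq : 0 ≤ q) :
    |x| ^ (2 * q) ≤ (1 + x ^ 2) ^ q := by
  rw [Real.rpow_mul (abs_nonneg _), Real.rpow_two, sq_abs]
  gcongr
  linarith

lemma one_add_sq_rpow_le {x : ℝ} (hx : 1 ≤ |x|) (q : ℝ) :
    (1 + x ^ 2) ^ q ≤ 2 ^ |q| * |x| ^ (2 * q) := by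
  have hx2 : 1 ≤ x ^ 2 := (one_le_sq_iff_one_le_abs x).2 hx
  rw [Real.rpow_mul (abs_nonneg _), Real.rpow_two, sq_abs]
  rcases le_total 0 q with hq | hq
  · rw [abs_of_nonneg hq, ← Real.mul_rpow (by norm_num) (sq_nonneg _)]
    gcongr
    linarith
  · calc (1 + x ^ 2) ^ q ≤ (x ^ 2) ^ q :=
          Real.rpow_le_rpow_of_nonpos (by linarith) (by linarith) hq
      _ ≤ 2 ^ |q| * (x ^ 2) ^ q := le_mul_of_one_le_left (by positivity)
          (Real.one_le_rpow one_le_two (abs_nonneg q))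

lemma memHF_of_norm_fCoef_le {γ : ℝ → Rn n} (hP : Function.Periodic γ 1) (hγ : Continuous γ)
    {s a C : ℝ} (hs : s < a - 1 / 2)
    (hC : ∀ (k : ℤ) (j : Fin n), k ≠ 0 → ‖fCoef γ k j‖ ≤ C * |(k : ℝ)| ^ (-a)) : MemHF s γ := by
  refine ⟨hP, hγ, summable_of_le_abs_rpow (b := 2 * a - 2 * s) (C := 2 ^ |s| * (n * C ^ 2))
    (by linarith) (fun k => by positivity) fun k hk => ?_⟩
  have hk0 : 0 < |(k : ℝ)| := abs_pos.2 (Int.cast_ne_zero.2 hk)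
  have hsum : ∑ j, ‖fCoef γ k j‖ ^ 2 ≤ n * (C ^ 2 * |(k : ℝ)| ^ (-(2 * a))) := by
    have hj : ∀ j ∈ Finset.univ, ‖fCoef γ k j‖ ^ 2 ≤ C ^ 2 * |(k : ℝ)| ^ (-(2 * a)) :=
      fun j _ => by
        refine (pow_le_pow_left₀ (norm_nonneg _) (hC k j hk) 2).trans_eq ?_
        rw [mul_pow, ← Real.rpow_mul_natCast hk0.le]
        push_cast
        ring_nf
    simpa using Finset.sum_le_sum hj
  calc (1 + (k : ℝ) ^ 2) ^ s * ∑ j, ‖fCoef γ k j‖ ^ 2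
      ≤ 2 ^ |s| * |(k : ℝ)| ^ (2 * s) * (n * (C ^ 2 * |(k : ℝ)| ^ (-(2 * a)))) := by
        gcongr
        exact one_add_sq_rpow_le (by exact_mod_cast Int.one_le_abs hk) s
    _ = 2 ^ |s| * (n * C ^ 2) * (|(k : ℝ)| ^ (2 * s) * |(k : ℝ)| ^ (-(2 * a))) := by ring
    _ = 2 ^ |s| * (n * C ^ 2) * |(k : ℝ)| ^ (-(2 * a - 2 * s)) := by
        rw [← Real.rpow_add hk0]
        ring_nf

lemma MemHF.summable_mul_norm_fCoef {s : ℝ} (hs : 3 / 2 < s) {γ : ℝ → Rn n} (hγ : MemHF s γ)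
    (j : Fin n) : Summable fun k : ℤ => |(k : ℝ)| * ‖fCoef γ k j‖ := by
  have hdual : Summable fun k : ℤ => (1 + (k : ℝ) ^ 2) ^ (1 - s) := by
    refine summable_of_le_abs_rpow (b := 2 * (s - 1)) (C := 1) (by linarith)
      (fun k => by positivity) fun k hk => ?_
    have hk' : 0 < |(k : ℝ)| := abs_pos.2 (Int.cast_ne_zero.2 hk)
    rw [one_mul, Real.rpow_neg hk'.le, show 1 - s = -(s - 1) by ring,
      Real.rpow_neg (by positivity)]
    exact inv_anti₀ (by positivity) (abs_rpow_two_mul_le k (by linarith))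
  refine Summable.of_nonneg_of_le (fun k => by positivity) (fun k => ?_) (hγ.2.2.add hdual)
  set q : ℝ := 1 + (k : ℝ) ^ 2
  have hq : 0 < q := by positivity
  have hsplit : q ^ s * q ^ (1 - s) = q := by rw [← Real.rpow_add hq]; simp
  have hj : ‖fCoef γ k j‖ ^ 2 ≤ ∑ j, ‖fCoef γ k j‖ ^ 2 :=
    Finset.single_le_sum (f := fun j => ‖fCoef γ k j‖ ^ 2) (fun _ _ => sq_nonneg _)
      (Finset.mem_univ j)
  refine le_of_sq_le_sq ?_ (by positivity)
  -- AM-GM for the two factors of `q = q ^ s * q ^ (1 - s)`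
  calc (|(k : ℝ)| * ‖fCoef γ k j‖) ^ 2 = (k : ℝ) ^ 2 * ‖fCoef γ k j‖ ^ 2 := by
        rw [mul_pow, sq_abs]
    _ ≤ q * ∑ j, ‖fCoef γ k j‖ ^ 2 := by gcongr; exact le_add_of_nonneg_left zero_le_one
    _ = (q ^ s * ∑ j, ‖fCoef γ k j‖ ^ 2) * q ^ (1 - s) := by rw [mul_right_comm, hsplit]
    _ ≤ (q ^ s * ∑ j, ‖fCoef γ k j‖ ^ 2 + q ^ (1 - s)) ^ 2 := by
        have h₁ : 0 ≤ q ^ s * ∑ j, ‖fCoef γ k j‖ ^ 2 := by positivity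
        have h₂ : 0 ≤ q ^ (1 - s) := by positivity
        nlinarith [mul_nonneg h₁ h₂]

lemma MemHF.contDiff_one {s : ℝ} (hs : 3 / 2 < s) {γ : ℝ → Rn n} (hγ : MemHF s γ) :
    ContDiff ℝ 1 γ := by
  refine contDiff_euclidean.2 fun j => ?_
  have hcont : Continuous fun u => (γ u j : ℂ) := by
    have := hγ.2.1
    fun_prop
  have hsum := hγ.summable_mul_norm_fCoef hs j
  simp only [fCoef_eq_fourierCoeffOn] at hsum
  exact Complex.reCLM.contDiff.comp (contDiff_one_of_summable_fourierCoeffOn hcont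
    (fun u => by simp only [hγ.1 u]) hsum)

/-! ### Covariance of vector-valued functions -/

section Covariance

variable {Ω E : Type*} [MeasurableSpace Ω] [NormedAddCommGroup E] [InnerProductSpace ℝ E]

/-- The covariance of two vector-valued functions: the trace of their covariance operator,
computed as the mean of the inner product minus the inner product of the means. -/
def innerCov (μ : Measure Ω) (f g : Ω → E) : ℝ :=
  (∫ x, ⟪f x, g x⟫ ∂μ) - ⟪∫ x, f x ∂μ, ∫ x, g x ∂μ⟫

lemma innerCov_self (μ : Measure Ω) (f : Ω → E) :
    innerCov μ f f = (∫ x, ‖f x‖ ^ 2 ∂μ) - ‖∫ x, f x ∂μ‖ ^ 2 := by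
  simp only [innerCov, real_inner_self_eq_norm_sq]

variable {μ : Measure Ω} {f g : Ω → E}

lemma innerCov_self_add_smul [IsFiniteMeasure μ] (hf : MemLp f 2 μ) (hg : MemLp g 2 μ) (τ : ℝ) :
    innerCov μ (fun x => f x + τ • g x) (fun x => f x + τ • g x) =
      innerCov μ f f + 2 * τ * innerCov μ f g + τ ^ 2 * innerCov μ g g := by
  have hfi := hf.integrable one_le_two
  have hgi := hg.integrable one_le_two
  have hff : Integrable (fun x => ‖f x‖ ^ 2) μ := hf.integrable_norm_pow two_ne_zero
  have hgg : Integrable (fun x => ‖g x‖ ^ 2) μ := hg.integrable_norm_pow two_ne_zero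
  have hfg : Integrable (fun x => ⟪f x, g x⟫) μ :=
    (hf.norm.integrable_mul hg.norm).mono' (hf.1.inner hg.1)
      (ae_of_all _ fun x => norm_inner_le_norm _ _)
  have hexpand : ∀ a b : E, ‖a + τ • b‖ ^ 2 = ‖a‖ ^ 2 + 2 * τ * ⟪a, b⟫ + τ ^ 2 * ‖b‖ ^ 2 :=
    fun a b => by
      rw [norm_add_sq_real, real_inner_smul_right, norm_smul, mul_pow, Real.norm_eq_abs, sq_abs]
      ring
  rw [innerCov_self, innerCov_self, innerCov_self, innerCov]
  simp only [hexpand]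
  rw [integral_add hfi (hgi.fun_smul τ), integral_smul, hexpand,
    integral_add (hff.fun_add (hfg.const_mul _)) (hgg.const_mul _),
    integral_add hff (hfg.const_mul _),
    integral_const_mul, integral_const_mul]
  ring

variable [CompleteSpace E] [IsProbabilityMeasure μ]

lemma innerCov_self_add_norm_integral_sub_sq (hf : MemLp f 2 μ) (a : E) :
    innerCov μ f f + ‖(∫ x, f x ∂μ) - a‖ ^ 2 = ∫ x, ‖f x - a‖ ^ 2 ∂μ := by
  have hfi := hf.integrable one_le_two
  have hff : Integrable (fun x => ‖f x‖ ^ 2) μ := hf.integrable_norm_pow two_ne_zero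
  have hfa : Integrable (fun x => 2 * ⟪a, f x⟫) μ := (hfi.const_inner a).const_mul 2
  simp only [norm_sub_sq_real, real_inner_comm a]
  have hffa : Integrable (fun x => ‖f x‖ ^ 2 - 2 * ⟪a, f x⟫) μ := hff.sub hfa
  rw [integral_add hffa (integrable_const _), integral_sub hff hfa, integral_const_mul,
    integral_inner hfi, integral_const, probReal_univ, one_smul, innerCov_self]
  ring

lemma innerCov_self_nonneg (hf : MemLp f 2 μ) : 0 ≤ innerCov μ f f := by
  have h := innerCov_self_add_norm_integral_sub_sq hf (∫ x, f x ∂μ)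
  rw [sub_self, norm_zero, zero_pow two_ne_zero, add_zero] at h
  exact h ▸ integral_nonneg fun _ => sq_nonneg _

lemma norm_integral_sq_le (hf : MemLp f 2 μ) : ‖∫ x, f x ∂μ‖ ^ 2 ≤ ∫ x, ‖f x‖ ^ 2 ∂μ :=
  sub_nonneg.1 (innerCov_self μ f ▸ innerCov_self_nonneg hf)

lemma abs_innerCov_le (hf : MemLp f 2 μ) (hg : MemLp g 2 μ) :
    |innerCov μ f g| ≤ (innerCov μ f f + innerCov μ g g) / 2 := by
  have hadd := innerCov_self_add_smul hf hg 1
  have hsub := innerCov_self_add_smul hf hg (-1)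
  have hadd₀ := hadd ▸ innerCov_self_nonneg (hf.add (hg.const_smul (1 : ℝ)))
  have hsub₀ := hsub ▸ innerCov_self_nonneg (hf.add (hg.const_smul (-1 : ℝ)))
  exact abs_le.2 ⟨by linarith, by linarith⟩

lemma innerCov_self_le_of_norm_sub_le (hf : MemLp f 2 μ) {a : E} {δ : ℝ}
    (hδ : ∀ᵐ x ∂μ, ‖f x - a‖ ≤ δ) : innerCov μ f f ≤ δ ^ 2 := by
  refine (le_add_of_nonneg_right (sq_nonneg ‖(∫ x, f x ∂μ) - a‖)).trans ?_
  rw [innerCov_self_add_norm_integral_sub_sq hf]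
  refine (integral_mono_ae ((hf.sub (memLp_const a)).integrable_norm_pow two_ne_zero)
    (integrable_const (δ ^ 2)) ?_).trans_eq (by simp)
  filter_upwards [hδ] with x hx
  exact pow_le_pow_left₀ (norm_nonneg _) hx 2

end Covariance

/-! ### Covariance along segments of curves -/

/-- The uniform distribution on the segment between `u` and `u + w`, which is the Dirac mass at
`u` if `w = 0`. -/
def segmentMeasure (u w : ℝ) : Measure ℝ :=
  (volume.restrict (Ioc (0 : ℝ) 1)).map fun s => u + s * w

instance (u w : ℝ) : IsProbabilityMeasure (segmentMeasure u w) :=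
  have : IsProbabilityMeasure (volume.restrict (Ioc (0 : ℝ) 1)) := ⟨by simp⟩
  Measure.isProbabilityMeasure_map (by fun_prop)

lemma ae_segmentMeasure_abs_sub_le (u w : ℝ) : ∀ᵐ x ∂segmentMeasure u w, |x - u| ≤ |w| := by
  refine (ae_map_iff (by fun_prop) (measurableSet_le (by fun_prop) (by fun_prop))).2 ?_
  filter_upwards [ae_restrict_mem measurableSet_Ioc] with s hs
  rw [add_sub_cancel_left, abs_mul, abs_of_pos hs.1]
  exact mul_le_of_le_one_left (abs_nonneg w) hs.2

section SegmentMeasure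

variable {E : Type*} [NormedAddCommGroup E] {f : ℝ → E}

lemma memLp_segmentMeasure (hf : Continuous f) (p : ℝ≥0∞) (u w : ℝ) :
    MemLp f p (segmentMeasure u w) := by
  obtain ⟨C, hC⟩ := (isCompact_Icc (a := u - |w|) (b := u + |w|)).exists_bound_of_continuousOn
    hf.continuousOn
  refine MemLp.of_bound hf.aestronglyMeasurable C ?_
  filter_upwards [ae_segmentMeasure_abs_sub_le u w] with x hx
  obtain ⟨hl, hr⟩ := abs_le.1 hx
  exact hC x ⟨by linarith, by linarith⟩

variable [NormedSpace ℝ E]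

lemma integral_segmentMeasure (hf : Continuous f) (u w : ℝ) :
    ∫ x, f x ∂segmentMeasure u w = ∫ s in (0 : ℝ)..1, f (u + s * w) := by
  rw [segmentMeasure, integral_map (by fun_prop) hf.aestronglyMeasurable,
    intervalIntegral.integral_of_le zero_le_one]

lemma smul_integral_segmentMeasure (hf : Continuous f) (u w : ℝ) :
    w • ∫ x, f x ∂segmentMeasure u w = ∫ x in u..(u + w), f x := by
  rw [integral_segmentMeasure hf]
  simp only [mul_comm _ w, intervalIntegral.smul_integral_comp_add_mul, mul_zero, add_zero, mul_one]

lemma continuous_integral_segmentMeasure (hf : Continuous f) :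
    Continuous fun p : ℝ × ℝ => ∫ x, f x ∂segmentMeasure p.1 p.2 := by
  simp only [integral_segmentMeasure hf]
  exact intervalIntegral.continuous_parametric_intervalIntegral_of_continuous'
    (f := fun (p : ℝ × ℝ) s => f (p.1 + s * p.2)) (by fun_prop) 0 1

lemma smul_integral_deriv_segmentMeasure [CompleteSpace E] (hf : ContDiff ℝ 1 f) (u w : ℝ) :
    w • ∫ x, deriv f x ∂segmentMeasure u w = f (u + w) - f u := by
  rw [smul_integral_segmentMeasure hf.continuous_deriv_one]
  exact intervalIntegral.integral_deriv_eq_sub (fun x _ => hf.differentiable one_ne_zero x)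
    (hf.continuous_deriv_one.intervalIntegrable _ _)

lemma integral_integral_segmentMeasure [CompleteSpace E] (hf : Continuous f)
    (hP : Function.Periodic f 1) (w : ℝ) :
    ∫ u in (0 : ℝ)..1, ∫ x, f x ∂segmentMeasure u w = ∫ u in (0 : ℝ)..1, f u := by
  have hint : IntegrableOn (fun u s : ℝ => f (u + s * w)).uncurry (uIoc 0 1 ×ˢ uIoc 0 1) :=
    Continuous.continuousOn (by fun_prop) |>.integrableOn_compact
      (isCompact_uIcc.prod isCompact_uIcc) |>.mono_set
      (prod_mono uIoc_subset_uIcc uIoc_subset_uIcc)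
  simp only [integral_segmentMeasure hf]
  rw [intervalIntegral_intervalIntegral_swap hint]
  simp only [integral_comp_add_of_periodic hP, intervalIntegral.integral_const, sub_zero, one_smul]

end SegmentMeasure

lemma continuous_innerCov_segmentMeasure {E : Type*} [NormedAddCommGroup E]
    [InnerProductSpace ℝ E] {f g : ℝ → E} (hf : Continuous f) (hg : Continuous g) :
    Continuous fun p : ℝ × ℝ => innerCov (segmentMeasure p.1 p.2) f g :=
  (continuous_integral_segmentMeasure (hf.inner hg)).sub
    ((continuous_integral_segmentMeasure hf).inner (continuous_integral_segmentMeasure hg))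

/-- The weighted covariance of the derivatives of `f` and `g` over the segment between `u` and
`u + w`. For `g = f` an arc-length curve this is `|w| ^ (-α)` times the chord defect
`1 - (‖f (u + w) - f u‖ / |w|) ^ 2`; for `g` a variation of `f` it is, up to the factor `α`, the
leading part of the first variation of the energy density. -/
def covDensity {E : Type*} [NormedAddCommGroup E] [InnerProductSpace ℝ E] (α : ℝ) (f g : ℝ → E)
    (u w : ℝ) : ℝ :=
  |w| ^ (-α) * innerCov (segmentMeasure u w) (deriv f) (deriv g)

section CovDensity

variable {E : Type*} [NormedAddCommGroup E] [InnerProductSpace ℝ E] {α : ℝ} {f g : ℝ → E}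

lemma continuous_covDensity_left (hf : ContDiff ℝ 1 f) (hg : ContDiff ℝ 1 g) (w : ℝ) :
    Continuous fun u => covDensity α f g u w :=
  continuous_const.mul ((continuous_innerCov_segmentMeasure hf.continuous_deriv_one
    hg.continuous_deriv_one).comp (Continuous.prodMk_left w))

lemma measurable_covDensity (hf : ContDiff ℝ 1 f) (hg : ContDiff ℝ 1 g) :
    Measurable fun p : ℝ × ℝ => covDensity α f g p.1 p.2 :=
  Measurable.mul (by fun_prop) (continuous_innerCov_segmentMeasure hf.continuous_deriv_one
    hg.continuous_deriv_one).measurable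

variable [CompleteSpace E]

lemma covDensity_self_nonneg (hf : ContDiff ℝ 1 f) (u w : ℝ) : 0 ≤ covDensity α f f u w :=
  mul_nonneg (by positivity)
    (innerCov_self_nonneg (memLp_segmentMeasure hf.continuous_deriv_one 2 u w))

lemma covDensity_eq (hf : ContDiff ℝ 1 f) (hg : ContDiff ℝ 1 g) (u : ℝ) {w : ℝ} (hw : w ≠ 0) :
    covDensity α f g u w =
      |w| ^ (-(α + 2)) * (w ^ 2 * (∫ x, ⟪deriv f x, deriv g x⟫ ∂segmentMeasure u w) -
        ⟪f (u + w) - f u, g (u + w) - g u⟫) := by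
  have hpow : |w| ^ (-α) = |w| ^ (-(α + 2)) * w ^ 2 := by
    rw [← sq_abs w, ← Real.rpow_two, ← Real.rpow_add (abs_pos.2 hw)]
    ring_nf
  rw [covDensity, hpow, innerCov, ← smul_integral_deriv_segmentMeasure hf,
    ← smul_integral_deriv_segmentMeasure hg, real_inner_smul_left, real_inner_smul_right]
  ring

lemma innerCov_self_deriv_segmentMeasure_le (hf : ContDiff ℝ 1 f) {K : ℝ}
    (hK : ∀ u v, ‖deriv f u - deriv f v‖ ≤ K * |u - v|) (u w : ℝ) :
    innerCov (segmentMeasure u w) (deriv f) (deriv f) ≤ K ^ 2 * w ^ 2 := by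
  have hK₀ : 0 ≤ K := by simpa using (norm_nonneg _).trans (hK 1 0)
  rw [← sq_abs w, ← mul_pow]
  refine innerCov_self_le_of_norm_sub_le
    (memLp_segmentMeasure hf.continuous_deriv_one 2 u w) (a := deriv f u) ?_
  filter_upwards [ae_segmentMeasure_abs_sub_le u w] with x hx
  exact (hK x u).trans (by gcongr)

lemma abs_covDensity_le (hf : ContDiff ℝ 1 f) (hg : ContDiff ℝ 1 g) {K : ℝ}
    (hK : ∀ u v, ‖deriv g u - deriv g v‖ ≤ K * |u - v|) (u : ℝ) {w : ℝ} (hw : w ≠ 0) :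
    |covDensity α f g u w| ≤ (covDensity α f f u w + K ^ 2 * |w| ^ (2 - α)) / 2 := by
  have hpow : |w| ^ (2 - α) = |w| ^ (-α) * w ^ 2 := by
    rw [← sq_abs w, ← Real.rpow_two, ← Real.rpow_add (abs_pos.2 hw)]
    ring_nf
  have hcov := abs_innerCov_le (memLp_segmentMeasure hf.continuous_deriv_one 2 u w)
    (memLp_segmentMeasure hg.continuous_deriv_one 2 u w)
  have hgg := innerCov_self_deriv_segmentMeasure_le hg hK u w
  have hq : 0 ≤ |w| ^ (-α) := by positivity
  rw [covDensity, covDensity, abs_mul, abs_of_nonneg hq, hpow]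
  calc |w| ^ (-α) * |innerCov (segmentMeasure u w) (deriv f) (deriv g)|
      ≤ |w| ^ (-α) * ((innerCov (segmentMeasure u w) (deriv f) (deriv f) + K ^ 2 * w ^ 2) / 2) := by
        gcongr
        linarith
    _ = _ := by ring

end CovDensity

/-! ### Integrability over the strip -/

/-- The product measure on one period times the window of increments, the domain of integration
of the energy. -/
def stripMeasure : Measure (ℝ × ℝ) :=
  (volume.restrict (Ioc (0 : ℝ) 1)).prod (volume.restrict (Ioo (-(1 : ℝ) / 2) (1 / 2)))

instance : IsFiniteMeasure stripMeasure := by unfold stripMeasure; infer_instance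

lemma ae_stripMeasure : ∀ᵐ p ∂stripMeasure, p.2 ≠ 0 ∧ |p.2| < 1 / 2 := by
  refine Measure.quasiMeasurePreserving_snd.ae (p := fun w => w ≠ 0 ∧ |w| < 1 / 2) ?_
  filter_upwards [ae_restrict_mem measurableSet_Ioo,
    ae_restrict_of_ae (Measure.ae_ne volume (0 : ℝ))] with w hw hw₀
  exact ⟨hw₀, abs_lt.2 ⟨by linarith [hw.1], by linarith [hw.2]⟩⟩

lemma integrableOn_Ioo_abs_rpow {r : ℝ} (hr : -1 < r) :
    IntegrableOn (fun w : ℝ => |w| ^ r) (Ioo (-(1 : ℝ) / 2) (1 / 2)) := by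
  have hball : Ioo (-(1 : ℝ) / 2) (1 / 2) = Metric.ball 0 (1 / 2) := by
    rw [Real.ball_eq_Ioo]; norm_num
  rw [hball]
  refine (integrableOn_fun_norm_addHaar volume (E := ℝ) (f := fun x => x ^ r)).2 ?_
  simpa using (intervalIntegral.intervalIntegrable_rpow' hr (a := 0) (b := 1 / 2)).1.mono_set
    Ioo_subset_Ioc_self

lemma integrable_stripMeasure_abs_rpow {r : ℝ} (hr : -1 < r) :
    Integrable (fun p : ℝ × ℝ => |p.2| ^ r) stripMeasure :=
  Integrable.comp_snd (integrableOn_Ioo_abs_rpow hr) _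

lemma hasSum_integral_chordDefect {γ : ℝ → Rn n} (hγ : ContDiff ℝ 1 γ)
    (hP : Function.Periodic γ 1) (w : ℝ) :
    HasSum (fun k : ℤ => (∑ j, ‖fCoef γ k j‖ ^ 2) * cosDefect (2 * Real.pi * k * w))
      (∫ u in (0 : ℝ)..1, (w ^ 2 * ‖deriv γ u‖ ^ 2 - ‖γ (u + w) - γ u‖ ^ 2)) := by
  have := hγ.continuous_deriv_one
  have hγ₀ := hγ.continuous
  have hcomp : ∀ j : Fin n, ∀ u, HasDerivAt (fun u => (γ u j : ℂ)) (deriv γ u j : ℂ) u :=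
    fun j u => ((EuclideanSpace.proj j : Rn n →L[ℝ] ℝ).hasFDerivAt.comp_hasDerivAt u
      (hγ.differentiable one_ne_zero u).hasDerivAt).ofReal_comp
  have hsum := hasSum_sum (s := Finset.univ) fun j _ => hasSum_integral_deriv_sq_sub_translation_sq
    (hcomp j) (by fun_prop) (fun u => by simp only [hP u]) w
  rw [← intervalIntegral.integral_finsetSum
    fun j _ => Continuous.intervalIntegrable (by fun_prop) _ _] at hsum
  simp only [fCoef_eq_fourierCoeffOn, Finset.sum_mul, cosDefect, EuclideanSpace.norm_sq_eq,
    PiLp.sub_apply, Finset.mul_sum, ← Finset.sum_sub_distrib]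
  simpa only [← Complex.ofReal_sub, Complex.norm_real] using hsum

lemma periodic_deriv {E : Type*} [NormedAddCommGroup E] [NormedSpace ℝ E] {f : ℝ → E}
    {T : ℝ} (hf : Function.Periodic f T) : Function.Periodic (deriv f) T := fun u => by
  rw [← deriv_comp_add_const, funext hf]

lemma hasSum_integral_covDensity_self {α : ℝ} {γ : ℝ → Rn n} (hγ : ContDiff ℝ 1 γ)
    (hP : Function.Periodic γ 1) {w : ℝ} (hw : w ≠ 0) :
    HasSum (fun k : ℤ => (∑ j, ‖fCoef γ k j‖ ^ 2) *
        (|w| ^ (-(α + 2)) * cosDefect (2 * Real.pi * k * w)))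
      (∫ u in (0 : ℝ)..1, covDensity α γ γ u w) := by
  have := hγ.continuous_deriv_one
  have hγ₀ := hγ.continuous
  have hP' : Function.Periodic (fun u => ‖deriv γ u‖ ^ 2) 1 := fun u => by
    simp only [periodic_deriv hP u]
  have hmean : Continuous fun u => ∫ x, ‖deriv γ x‖ ^ 2 ∂segmentMeasure u w :=
    (continuous_integral_segmentMeasure (by fun_prop)).comp (Continuous.prodMk_left w)
  simp only [covDensity_eq hγ hγ _ hw, real_inner_self_eq_norm_sq]
  rw [intervalIntegral.integral_const_mul, intervalIntegral.integral_sub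
    (Continuous.intervalIntegrable (by fun_prop) _ _)
    (Continuous.intervalIntegrable (by fun_prop) _ _), intervalIntegral.integral_const_mul,
    integral_integral_segmentMeasure (by fun_prop) hP', ← intervalIntegral.integral_const_mul,
    ← intervalIntegral.integral_sub (Continuous.intervalIntegrable (by fun_prop) _ _)
    (Continuous.intervalIntegrable (by fun_prop) _ _)]
  simpa only [mul_left_comm] using
    (hasSum_integral_chordDefect hγ hP w).mul_left (|w| ^ (-(α + 2)))

lemma lintegral_covDensity_self {α : ℝ} (hα : α ∈ Ioo (1 : ℝ) 3) {γ : ℝ → Rn n}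
    (hγ : ContDiff ℝ 1 γ) (hP : Function.Periodic γ 1) :
    ∫⁻ p, ENNReal.ofReal (covDensity α γ γ p.1 p.2) ∂stripMeasure =
      ∑' k : ℤ, ENNReal.ofReal ((∑ j, ‖fCoef γ k j‖ ^ 2) * multiplier α k) := by
  have hterm : ∀ (k : ℤ) (w : ℝ), 0 ≤ (∑ j, ‖fCoef γ k j‖ ^ 2) *
      (|w| ^ (-(α + 2)) * cosDefect (2 * Real.pi * k * w)) := fun k w =>
    mul_nonneg (by positivity) (mul_nonneg (by positivity) (cosDefect_nonneg _))
  have hinner : ∀ w ≠ 0, ∫⁻ u in Ioc (0 : ℝ) 1, ENNReal.ofReal (covDensity α γ γ u w) =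
      ∑' k : ℤ, ENNReal.ofReal ((∑ j, ‖fCoef γ k j‖ ^ 2) *
        (|w| ^ (-(α + 2)) * cosDefect (2 * Real.pi * k * w))) := fun w hw => by
    have hsum := hasSum_integral_covDensity_self (α := α) hγ hP hw
    rw [← ENNReal.ofReal_tsum_of_nonneg (hterm · w) hsum.summable, hsum.tsum_eq,
      intervalIntegral.integral_of_le zero_le_one]
    exact (ofReal_integral_eq_lintegral_ofReal
      ((continuous_covDensity_left hγ hγ w).intervalIntegrable 0 1).1
      (ae_of_all _ fun u => covDensity_self_nonneg hγ u w)).symm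
  have hmeas := measurable_cosDefect
  rw [stripMeasure, lintegral_prod_symm _ (measurable_covDensity hγ hγ).ennreal_ofReal.aemeasurable,
    lintegral_congr_ae ((ae_restrict_of_ae (Measure.ae_ne volume (0 : ℝ))).mono hinner),
    lintegral_tsum fun k => by fun_prop]
  refine tsum_congr fun k => ?_
  rw [multiplier, ← integral_const_mul, ofReal_integral_eq_lintegral_ofReal
    ((integrable_rpow_mul_cosDefect hα k).const_mul _).integrableOn (ae_of_all _ (hterm k))]

lemma integrable_covDensity_self {α : ℝ} (hα : α ∈ Ioo (1 : ℝ) 3) {γ : ℝ → Rn n}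
    (hγ : ContDiff ℝ 1 γ) (hS : MemHF ((α + 1) / 2) γ) :
    Integrable (fun p : ℝ × ℝ => covDensity α γ γ p.1 p.2) stripMeasure := by
  refine ⟨(measurable_covDensity hγ hγ).aestronglyMeasurable, ?_⟩
  have hnn : ∀ p : ℝ × ℝ, 0 ≤ covDensity α γ γ p.1 p.2 := fun p =>
    covDensity_self_nonneg hγ p.1 p.2
  rw [hasFiniteIntegral_iff_ofReal (ae_of_all _ hnn),
    lintegral_covDensity_self hα hγ hS.1]
  refine lt_top_iff_ne_top.2 (Summable.tsum_ofReal_ne_top ?_)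
  have hM : 0 ≤ ∫ s, multiplierKernel α s := integral_nonneg (multiplierKernel_nonneg α)
  refine Summable.of_nonneg_of_le
    (fun k => mul_nonneg (by positivity) (multiplier_nonneg α k)) (fun k => ?_)
    (hS.2.2.mul_left (∫ s, multiplierKernel α s))
  have hpow := abs_rpow_two_mul_le (k : ℝ) (q := (α + 1) / 2) (by linarith [hα.1])
  rw [mul_div_cancel₀ _ two_ne_zero] at hpow
  calc (∑ j, ‖fCoef γ k j‖ ^ 2) * multiplier α k
      ≤ (∑ j, ‖fCoef γ k j‖ ^ 2) *
          ((∫ s, multiplierKernel α s) * (1 + (k : ℝ) ^ 2) ^ ((α + 1) / 2)) := by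
        gcongr
        exact (multiplier_le hα k).trans (by gcongr)
    _ = _ := by ring

/-! ### Expansion of negative powers -/

lemma abs_rpow_neg_sub_le {q m s t : ℝ} (hq : 0 ≤ q) (hm : 0 < m) (hs : m ≤ s) (ht : m ≤ t) :
    |s ^ (-q) - t ^ (-q)| ≤ q * m ^ (-q - 1) * |s - t| := by
  refine Convex.norm_image_sub_le_of_norm_hasDerivWithin_le (f := fun x : ℝ => x ^ (-q))
    (f' := fun x => -q * x ^ (-q - 1)) (s := Ici m) (fun x hx => ?_) (fun x hx => ?_)
    (convex_Ici m) ht hs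
  · exact (Real.hasDerivAt_rpow_const (Or.inl (hm.trans_le hx).ne')).hasDerivWithinAt
  · rw [Real.norm_eq_abs, abs_mul, abs_neg, abs_of_nonneg hq,
      abs_of_nonneg (Real.rpow_nonneg (hm.le.trans hx) _)]
    exact mul_le_mul_of_nonneg_left (Real.rpow_le_rpow_of_nonpos hm hx (by linarith)) hq

lemma abs_rpow_neg_translation_sub_le {p m s t b : ℝ} (hp : 0 ≤ p) (hm : 0 < m) (hs : m ≤ s)
    (hsb : m ≤ s + b) (hst : s ≤ t) :
    |((s + b) ^ (-p) - s ^ (-p)) - ((t + b) ^ (-p) - t ^ (-p))| ≤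
      p * (p + 1) * m ^ (-p - 2) * |b| * (t - s) := by
  have hd : ∀ x : ℝ, m ≤ x → HasDerivAt (fun x : ℝ => x ^ (-p)) (-p * x ^ (-(p + 1))) x :=
    fun x hx => by
      simpa only [neg_add'] using Real.hasDerivAt_rpow_const (p := -p) (Or.inl (hm.trans_le hx).ne')
  have hmem : ∀ x ∈ Icc s t, m ≤ x ∧ m ≤ x + b := fun x hx =>
    ⟨hs.trans hx.1, by linarith [hx.1]⟩
  have hmvt := Convex.norm_image_sub_le_of_norm_hasDerivWithin_le
    (f := fun x : ℝ => (x + b) ^ (-p) - x ^ (-p))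
    (f' := fun x => -p * (x + b) ^ (-(p + 1)) - -p * x ^ (-(p + 1))) (s := Icc s t)
    (C := p * (p + 1) * m ^ (-p - 2) * |b|) (fun x hx => ?_) (fun x hx => ?_) (convex_Icc _ _)
    (right_mem_Icc.2 hst) (left_mem_Icc.2 hst)
  · rwa [Real.norm_eq_abs, Real.norm_eq_abs, abs_sub_comm s, abs_of_nonneg (sub_nonneg.2 hst)]
      at hmvt
  · exact (((hd _ (hmem x hx).2).comp_add_const x b).sub (hd x (hmem x hx).1)).hasDerivWithinAt
  · have hle := abs_rpow_neg_sub_le (q := p + 1) (by linarith) hm (hmem x hx).2 (hmem x hx).1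
    rw [add_sub_cancel_left, show -(p + 1) - 1 = -p - 2 by ring] at hle
    rw [← mul_sub, Real.norm_eq_abs, abs_mul, abs_neg, abs_of_nonneg hp, mul_assoc p, mul_assoc p]
    gcongr

lemma rpow_neg_sub_mul_le_rpow_neg {p s y : ℝ} (hp : 0 ≤ p) (hs : 0 < s) (hy : 0 < y) :
    s ^ (-p) - p * s ^ (-(p + 1)) * (y - s) ≤ y ^ (-p) := by
  have hlog : Real.log (y / s) ≤ y / s - 1 := Real.log_le_sub_one_of_pos (div_pos hy hs)
  have hratio : 1 - p * (y / s - 1) ≤ (y / s) ^ (-p) := by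
    rw [Real.rpow_def_of_pos (div_pos hy hs)]
    linarith [Real.add_one_le_exp (Real.log (y / s) * -p), mul_le_mul_of_nonneg_left hlog hp]
  rw [Real.div_rpow hy.le hs.le, le_div_iff₀ (by positivity)] at hratio
  rw [neg_add', Real.rpow_sub_one hs.ne']
  refine le_of_eq_of_le ?_ hratio
  field_simp

/-- The change `b = x - x₀` is frozen first, which leaves the increment `y - 1 - b` at the base
point `1 + b`, where convexity bounds `y ^ (-p)` from below. -/
lemma rpow_neg_sub_rpow_neg_le {p m x x₀ y : ℝ} (hp : 0 ≤ p) (hm : 0 < m) (hx : m ≤ x)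
    (hx₀ : m ≤ x₀) (hx₁ : x₀ ≤ 1) (hy : 0 < y) :
    x ^ (-p) - y ^ (-p) ≤ x₀ ^ (-p) - 1 + p * ((y - 1) - (x - x₀)) +
      p * (p + 1) * m ^ (-p - 2) * |x - x₀| * ((1 - x₀) + |(y - 1) - (x - x₀)|) := by
  set b := x - x₀ with hb
  set B := p * (p + 1) * m ^ (-p - 2) with hB
  have hxb : x₀ + b = x := by rw [hb]; ring
  have hbase : m ≤ 1 + b := by linarith
  have hfrozen := abs_rpow_neg_translation_sub_le hp hm hx₀ (hxb ▸ hx) hx₁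
  rw [hxb, Real.one_rpow] at hfrozen
  have hconvex := rpow_neg_sub_mul_le_rpow_neg hp (hm.trans_le hbase) hy
  have hslope : p * |(1 + b) ^ (-(p + 1)) - 1| ≤ B * |b| := by
    have h := abs_rpow_neg_sub_le (q := p + 1) (by linarith) hm hbase (hx₀.trans hx₁)
    rw [Real.one_rpow, add_sub_cancel_left, show -(p + 1) - 1 = -p - 2 by ring] at h
    calc _ ≤ p * ((p + 1) * m ^ (-p - 2) * |b|) := by gcongr
      _ = _ := by rw [hB]; ring
  have hincr : p * ((1 + b) ^ (-(p + 1)) - 1) * (y - 1 - b) ≤ B * |b| * |y - 1 - b| := by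
    refine (le_abs_self _).trans ?_
    rw [abs_mul, abs_mul, abs_of_nonneg hp]
    gcongr
  linarith [(abs_le.1 hfrozen).2]

/-- The constant in the second order expansion `rpow_neg_sub_rpow_neg_mul_le` of the negative
powers `x ^ (-p)` on `[m, ∞)`. -/
def rpowNegConst (p m : ℝ) : ℝ :=
  p * m ^ (-p - 1) + p + 2 * (p * (p + 1) * m ^ (-p - 2))

lemma rpowNegConst_nonneg {p m : ℝ} (hp : 0 ≤ p) (hm : 0 ≤ m) : 0 ≤ rpowNegConst p m := by
  unfold rpowNegConst
  positivity

lemma rpow_neg_sub_rpow_neg_mul_le {p m x x₀ y ε : ℝ} (hp : 0 ≤ p) (hm : 0 < m) (hx : m ≤ x)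
    (hx₀ : m ≤ x₀) (hx₁ : x₀ ≤ 1) (hy : 0 < y) (hxx₀ : |x - x₀| ≤ 3 * ε) (hε₁ : 3 * ε ≤ 1) :
    (x ^ (-p) - y ^ (-p)) * (1 + 3 * ε) ≤ x₀ ^ (-p) - 1 + p * ((y - 1) - (x - x₀)) +
      3 * ε * rpowNegConst p m * ((1 - x₀) + |(y - 1) - (x - x₀)|) := by
  set B := p * (p + 1) * m ^ (-p - 2)
  have hε : 0 ≤ 3 * ε := (abs_nonneg _).trans hxx₀
  have hexpand := rpow_neg_sub_rpow_neg_le hp hm hx hx₀ hx₁ hy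
  have hfirst := abs_rpow_neg_sub_le hp hm hx₀ (hx₀.trans hx₁)
  rw [Real.one_rpow, abs_sub_comm x₀, abs_of_nonneg (sub_nonneg.2 hx₁)] at hfirst
  set z := (y - 1) - (x - x₀)
  set ν := 1 - x₀
  have hν₀ : 0 ≤ ν := sub_nonneg.2 hx₁
  have hz : p * z ≤ p * |z| := by gcongr; exact le_abs_self z
  have hG := (le_abs_self _).trans hfirst
  have hslope : 0 ≤ p * m ^ (-p - 1) := by positivity
  have hB₀ : 0 ≤ B := by positivity
  calc (x ^ (-p) - y ^ (-p)) * (1 + 3 * ε)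
      ≤ (x₀ ^ (-p) - 1 + p * z + B * (3 * ε) * (ν + |z|)) * (1 + 3 * ε) := by
        gcongr
        exact hexpand.trans (by gcongr)
    _ = x₀ ^ (-p) - 1 + p * z + 3 * ε * (x₀ ^ (-p) - 1 + p * z) +
          3 * ε * B * (ν + |z|) * (1 + 3 * ε) := by ring
    _ ≤ x₀ ^ (-p) - 1 + p * z + 3 * ε * ((p * m ^ (-p - 1) + p) * (ν + |z|)) +
          3 * ε * B * (ν + |z|) * (1 + 1) := by
        gcongr
        nlinarith [mul_nonneg hslope (abs_nonneg z), mul_nonneg hp hν₀]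
    _ = _ := by rw [rpowNegConst]; ring

/-! ### The energy density -/

lemma norm_sub_eq_abs_mul_norm_integral {γ : ℝ → Rn n} (hγ : ContDiff ℝ 1 γ) (u w : ℝ) :
    ‖γ (u + w) - γ u‖ = |w| * ‖∫ x, deriv γ x ∂segmentMeasure u w‖ := by
  rw [← smul_integral_deriv_segmentMeasure hγ, norm_smul, Real.norm_eq_abs]

lemma norm_integral_deriv_segmentMeasure_pos {γ : ℝ → Rn n} (hγ : ContDiff ℝ 1 γ)
    (hinj : PerInjective γ) (hreg : RegularCurve γ) (u : ℝ) {w : ℝ} (hw : |w| < 1) :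
    0 < ‖∫ x, deriv γ x ∂segmentMeasure u w‖ := by
  refine norm_pos_iff.2 fun hzero => ?_
  have hchord := smul_integral_deriv_segmentMeasure hγ u w
  rw [hzero, smul_zero, eq_comm, sub_eq_zero] at hchord
  obtain ⟨k, hk⟩ := hinj _ _ hchord
  obtain rfl : k = 0 := by
    have hkw : w = -(k : ℝ) := by linarith
    rw [hkw, abs_neg] at hw
    exact Int.abs_lt_one_iff.1 (by exact_mod_cast hw)
  obtain rfl : w = 0 := by simpa using hk
  rw [integral_segmentMeasure hγ.continuous_deriv_one] at hzero
  exact hreg u (by simpa using hzero)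

lemma exists_pos_le_norm_integral_deriv_segmentMeasure {γ : ℝ → Rn n} (hγ : ContDiff ℝ 1 γ)
    (hP : Function.Periodic γ 1) (hinj : PerInjective γ) (hreg : RegularCurve γ) :
    ∃ c > 0, ∀ u w, |w| ≤ 1 / 2 → c ≤ ‖∫ x, deriv γ x ∂segmentMeasure u w‖ := by
  have hγ' := hγ.continuous_deriv_one
  obtain ⟨⟨v, r⟩, hvr, hmin⟩ := ((isCompact_Icc (a := (0 : ℝ)) (b := 1)).prod
    (isCompact_Icc (a := -(1 / 2 : ℝ)) (b := 1 / 2))).exists_isMinOn ⟨(0, 0), by norm_num⟩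
    (continuous_integral_segmentMeasure hγ').norm.continuousOn
  have hr : |r| < 1 := (abs_le.2 hvr.2).trans_lt (by norm_num)
  refine ⟨_, norm_integral_deriv_segmentMeasure_pos hγ hinj hreg v hr, fun u w hw => ?_⟩
  have hper : Function.Periodic (fun u => ‖∫ x, deriv γ x ∂segmentMeasure u w‖) 1 := fun u => by
    simp only [integral_segmentMeasure hγ', add_right_comm u 1, periodic_deriv hP _]
  obtain ⟨u', hu', heq⟩ := hper.exists_mem_Ico₀ one_pos u
  exact (hmin (a := (u', w)) ⟨Ico_subset_Icc_self hu', abs_le.1 hw⟩).trans_eq heq.symm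

lemma arcLen_eq_abs_mul_integral {γ : ℝ → Rn n} (hγ : ContDiff ℝ 1 γ) (u w : ℝ) :
    arcLen γ u w = |w| * ∫ x, ‖deriv γ x‖ ∂segmentMeasure u w := by
  rw [arcLen, ← smul_integral_segmentMeasure hγ.continuous_deriv_one.norm, smul_eq_mul, abs_mul,
    abs_of_nonneg (integral_nonneg fun x => norm_nonneg (deriv γ x))]

lemma abs_integral_norm_deriv_sub_one_le {γ : ℝ → Rn n} (hγ : ContDiff ℝ 1 γ) {ε : ℝ}
    (hε : ∀ u, |‖deriv γ u‖ - 1| ≤ ε) (u w : ℝ) :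
    |(∫ x, ‖deriv γ x‖ ∂segmentMeasure u w) - 1| ≤ ε := by
  have hint := (memLp_segmentMeasure hγ.continuous_deriv_one.norm 1 u w).integrable le_rfl
  have hmean : (∫ x, ‖deriv γ x‖ ∂segmentMeasure u w) - 1 =
      ∫ x, (‖deriv γ x‖ - 1) ∂segmentMeasure u w := by
    rw [integral_sub hint (integrable_const 1), integral_const, probReal_univ, one_smul]
  rw [hmean]
  simpa using norm_integral_le_of_norm_le_const (f := fun x => ‖deriv γ x‖ - 1)
    (ae_of_all (segmentMeasure u w) hε)

lemma idist_pos {γ : ℝ → Rn n} (hγ : ContDiff ℝ 1 γ) {ε : ℝ} (hε : ∀ u, |‖deriv γ u‖ - 1| ≤ ε)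
    (hε₃ : ε < 1 / 3) (u : ℝ) {w : ℝ} (hw₀ : w ≠ 0) (hw : |w| ≤ 1 / 2) : 0 < idist γ u w := by
  have hw' : 0 < |w| := abs_pos.2 hw₀
  have hlen : curveLen γ = ∫ x, ‖deriv γ x‖ ∂segmentMeasure 0 1 := by
    rw [integral_segmentMeasure hγ.continuous_deriv_one.norm, curveLen]
    simp only [zero_add, mul_one]
  obtain ⟨hL, -⟩ := abs_le.1 (abs_integral_norm_deriv_sub_one_le hγ hε 0 1)
  obtain ⟨hl, hr⟩ := abs_le.1 (abs_integral_norm_deriv_sub_one_le hγ hε u w)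
  rw [idist, arcLen_eq_abs_mul_integral hγ, hlen]
  set A := ∫ x, ‖deriv γ x‖ ∂segmentMeasure u w
  have hA : 0 < A := by linarith
  have harc : |w| * A ≤ 1 / 2 * A := by gcongr
  exact lt_min (mul_pos hw' hA) (by linarith)

lemma mul_rpow_neg_eq_mul_sq_rpow {α a r : ℝ} (ha : 0 ≤ a) (hr : 0 ≤ r) :
    (a * r) ^ (-α) = a ^ (-α) * (r ^ 2) ^ (-(α / 2)) := by
  rw [Real.mul_rpow ha hr, ← Real.rpow_natCast_mul hr]
  ring_nf

lemma ohIntegrand_of_arcLengthParam (α : ℝ) {γ : ℝ → Rn n} (hγ : ContDiff ℝ 1 γ)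
    (harc : ArcLengthParam γ) (u : ℝ) {w : ℝ} (hw : |w| ≤ 1 / 2) :
    ohIntegrand α γ u w =
      |w| ^ (-α) * ((‖∫ x, deriv γ x ∂segmentMeasure u w‖ ^ 2) ^ (-(α / 2)) - 1) := by
  have hspeed : ∀ u, ‖deriv γ u‖ = 1 := harc
  have hdist : idist γ u w = |w| := by
    rw [idist, arcLen_eq_abs_mul_integral hγ, curveLen]
    simp only [hspeed, intervalIntegral.integral_const, integral_const, probReal_univ, sub_zero,
      smul_eq_mul, mul_one]
    exact min_eq_left (by linarith)
  rw [ohIntegrand, hdist, norm_sub_eq_abs_mul_norm_integral hγ, one_div, one_div,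
    ← Real.rpow_neg (by positivity), ← Real.rpow_neg (abs_nonneg w),
    mul_rpow_neg_eq_mul_sq_rpow (abs_nonneg w) (norm_nonneg _), hspeed, hspeed]
  ring

/-- The intrinsic distance is at most the arc length, which by Cauchy-Schwarz is at most `|w|`
times the quadratic mean of the speed. -/
lemma mul_rpow_neg_le_idist_rpow_neg {α : ℝ} (hα : 0 ≤ α) {γ : ℝ → Rn n} (hγ : ContDiff ℝ 1 γ)
    {ε : ℝ} (hε : ∀ u, |‖deriv γ u‖ - 1| ≤ ε) (hε₃ : ε < 1 / 3) (u : ℝ) {w : ℝ} (hw₀ : w ≠ 0)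
    (hw : |w| ≤ 1 / 2) :
    |w| ^ (-α) * (∫ x, ‖deriv γ x‖ ^ 2 ∂segmentMeasure u w) ^ (-(α / 2)) ≤
      idist γ u w ^ (-α) := by
  have hy : 0 ≤ ∫ x, ‖deriv γ x‖ ^ 2 ∂segmentMeasure u w := integral_nonneg fun _ => by positivity
  have hidist : idist γ u w ≤ |w| * √(∫ x, ‖deriv γ x‖ ^ 2 ∂segmentMeasure u w) := by
    refine (min_le_left _ _).trans ?_
    rw [arcLen_eq_abs_mul_integral hγ]
    refine mul_le_mul_of_nonneg_left (Real.le_sqrt_of_sq_le ?_) (abs_nonneg w)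
    simpa using norm_integral_sq_le (memLp_segmentMeasure hγ.continuous_deriv_one.norm 2 u w)
  nth_rw 1 [← Real.sq_sqrt hy]
  rw [← mul_rpow_neg_eq_mul_sq_rpow (abs_nonneg w) (Real.sqrt_nonneg _)]
  exact Real.rpow_le_rpow_of_nonpos (idist_pos hγ hε hε₃ u hw₀ hw) hidist (by linarith)

lemma max_ohIntegrand_zero_le {α : ℝ} (hα : 0 ≤ α) {γ : ℝ → Rn n} (hγ : ContDiff ℝ 1 γ) {ε : ℝ}
    (hε : ∀ u, |‖deriv γ u‖ - 1| ≤ ε) (hε₄ : ε ≤ 1 / 4) {u w : ℝ} (hw₀ : w ≠ 0) (hw : |w| ≤ 1 / 2)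
    (hmean : 0 < ‖∫ x, deriv γ x ∂segmentMeasure u w‖) :
    max (ohIntegrand α γ u w) 0 ≤
      |w| ^ (-α) * (((‖∫ x, deriv γ x ∂segmentMeasure u w‖ ^ 2) ^ (-(α / 2)) -
        (∫ x, ‖deriv γ x‖ ^ 2 ∂segmentMeasure u w) ^ (-(α / 2))) * (1 + 3 * ε)) := by
  have hε₃ : ε < 1 / 3 := by linarith
  have hxy := norm_integral_sq_le (memLp_segmentMeasure hγ.continuous_deriv_one 2 u w)
  have hidist := mul_rpow_neg_le_idist_rpow_neg hα hγ hε hε₃ u hw₀ hw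
  have hpos := idist_pos hγ hε hε₃ u hw₀ hw
  set y := ∫ x, ‖deriv γ x‖ ^ 2 ∂segmentMeasure u w
  set x := ‖∫ x, deriv γ x ∂segmentMeasure u w‖ with hx
  have hdiff : 0 ≤ (x ^ 2) ^ (-(α / 2)) - y ^ (-(α / 2)) :=
    sub_nonneg.2 (Real.rpow_le_rpow_of_nonpos (by positivity) hxy (by linarith))
  have hfactor : 1 / ‖γ (u + w) - γ u‖ ^ α - 1 / idist γ u w ^ α ≤
      |w| ^ (-α) * ((x ^ 2) ^ (-(α / 2)) - y ^ (-(α / 2))) := by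
    rw [norm_sub_eq_abs_mul_norm_integral hγ, one_div, one_div, ← Real.rpow_neg (by positivity),
      ← Real.rpow_neg hpos.le, mul_rpow_neg_eq_mul_sq_rpow (abs_nonneg w) (norm_nonneg _), ← hx]
    linarith
  have hspeed : ‖deriv γ (u + w)‖ * ‖deriv γ u‖ ≤ 1 + 3 * ε := by
    have h₁ := abs_le.1 (hε (u + w))
    have h₂ := abs_le.1 (hε u)
    nlinarith [norm_nonneg (deriv γ (u + w)), norm_nonneg (deriv γ u)]
  have hε₀ : 0 ≤ ε := (abs_nonneg _).trans (hε u)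
  refine max_le ?_ (by positivity)
  rw [ohIntegrand, mul_assoc, ← mul_assoc (|w| ^ (-α))]
  exact mul_le_mul hfactor hspeed (by positivity) (by positivity)

/-! ### Second order expansion of the energy density -/

lemma abs_norm_add_sq_sub_norm_sq_le {E : Type*} [SeminormedAddCommGroup E] {a b : E} {ε : ℝ}
    (ha : ‖a‖ ≤ 1) (hb : ‖b‖ ≤ ε) (hε : ε ≤ 1) : |‖a + b‖ ^ 2 - ‖a‖ ^ 2| ≤ 3 * ε := by
  have hdiff : |‖a + b‖ - ‖a‖| ≤ ‖b‖ := by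
    simpa using abs_norm_sub_norm_le (a + b) a
  have hsum : ‖a + b‖ + ‖a‖ ≤ 3 := by linarith [norm_add_le a b]
  rw [sq_sub_sq, abs_mul, abs_of_nonneg (by positivity)]
  exact mul_le_mul hsum (hdiff.trans hb) (abs_nonneg _) zero_le_three

section Mean

variable {Ω E : Type*} [MeasurableSpace Ω] [NormedAddCommGroup E] [InnerProductSpace ℝ E]
  {μ : Measure Ω} [IsProbabilityMeasure μ] {f g : Ω → E} {c H τ : ℝ}

lemma norm_integral_smul_le (hgH : ∀ᵐ x ∂μ, ‖g x‖ ≤ H) : ‖∫ x, τ • g x ∂μ‖ ≤ |τ| * H := by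
  rw [integral_smul, norm_smul, Real.norm_eq_abs]
  gcongr
  simpa using norm_integral_le_of_norm_le_const hgH

lemma half_le_norm_integral_add_smul (hf : Integrable f μ) (hg : Integrable g μ)
    (hgH : ∀ᵐ x ∂μ, ‖g x‖ ≤ H) (hc : c ≤ ‖∫ x, f x ∂μ‖) (hτ : |τ| * H ≤ c / 4) :
    c / 2 ≤ ‖∫ x, (f x + τ • g x) ∂μ‖ := by
  have hshift := norm_integral_smul_le (τ := τ) hgH
  have hc₀ : 0 ≤ c := by linarith [(norm_nonneg _).trans hshift]
  rw [integral_add hf (hg.fun_smul τ)]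
  linarith [norm_sub_le_norm_add (∫ x, f x ∂μ) (∫ x, τ • g x ∂μ)]

lemma rpow_neg_integral_add_smul_le [CompleteSpace E] {p : ℝ} (hp : 0 ≤ p) (hc₀ : 0 < c)
    (hf : MemLp f 2 μ) (hg : MemLp g 2 μ) (hf₁ : ∀ᵐ x ∂μ, ‖f x‖ = 1) (hgH : ∀ᵐ x ∂μ, ‖g x‖ ≤ H)
    (hc : c ≤ ‖∫ x, f x ∂μ‖) (hτ : |τ| * H ≤ c / 4) {z : ℝ}
    (hz : z = 2 * τ * innerCov μ f g + τ ^ 2 * innerCov μ g g) :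
    ((‖∫ x, (f x + τ • g x) ∂μ‖ ^ 2) ^ (-p) - (∫ x, ‖f x + τ • g x‖ ^ 2 ∂μ) ^ (-p)) *
        (1 + 3 * (|τ| * H)) ≤
      (‖∫ x, f x ∂μ‖ ^ 2) ^ (-p) - 1 + p * z +
        3 * (|τ| * H) * rpowNegConst p ((c / 2) ^ 2) * (innerCov μ f f + |z|) := by
  have hfi := hf.integrable one_le_two
  have hgi := hg.integrable one_le_two
  have hfone : ∫ x, ‖f x‖ ^ 2 ∂μ = 1 := by
    rw [integral_congr_ae (g := fun _ => (1 : ℝ)) (hf₁.mono fun x hx => by simp only [hx, one_pow])]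
    simp
  have hmean₁ : ‖∫ x, f x ∂μ‖ ≤ 1 := by
    simpa using norm_integral_le_of_norm_le_const (hf₁.mono fun x hx => hx.le)
  have hhalf := half_le_norm_integral_add_smul hfi hgi hgH hc hτ
  have hsq := norm_integral_sq_le (hf.add (hg.const_smul τ))
  have hcov := innerCov_self_add_smul hf hg τ
  rw [innerCov_self, innerCov_self μ f, hfone] at hcov
  have hshift : |‖∫ x, (f x + τ • g x) ∂μ‖ ^ 2 - ‖∫ x, f x ∂μ‖ ^ 2| ≤ 3 * (|τ| * H) := by
    rw [integral_add hfi (hgi.fun_smul τ)]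
    exact abs_norm_add_sq_sub_norm_sq_le hmean₁ (norm_integral_smul_le hgH) (by linarith)
  have hx : (c / 2) ^ 2 ≤ ‖∫ x, (f x + τ • g x) ∂μ‖ ^ 2 := by gcongr
  have hm : 0 < (c / 2) ^ 2 := by positivity
  have h := rpow_neg_sub_rpow_neg_mul_le hp hm hx (pow_le_pow_left₀ (by positivity)
    (by linarith : c / 2 ≤ ‖∫ x, f x ∂μ‖) 2) (pow_le_one₀ (norm_nonneg _) hmean₁)
    (hm.trans_le (hx.trans hsq)) hshift (by linarith)
  have hz' : (∫ x, ‖f x + τ • g x‖ ^ 2 ∂μ) - 1 -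
      (‖∫ x, (f x + τ • g x) ∂μ‖ ^ 2 - ‖∫ x, f x ∂μ‖ ^ 2) = z := by linarith
  rw [innerCov_self, hfone, ← hz']
  exact h

end Mean

lemma deriv_add_smul {γ h : ℝ → Rn n} (hγ : ContDiff ℝ 1 γ) (hh : ContDiff ℝ 1 h) (τ : ℝ) :
    deriv (γ + τ • h) = fun u => deriv γ u + τ • deriv h u :=
  funext fun u => ((hγ.differentiable one_ne_zero u).hasDerivAt.add
    ((hh.differentiable one_ne_zero u).hasDerivAt.const_smul τ)).deriv

lemma max_ohIntegrand_add_smul_zero_le {α : ℝ} (hα : 0 ≤ α) {γ h : ℝ → Rn n}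
    (hγ : ContDiff ℝ 1 γ) (harc : ArcLengthParam γ) (hh : ContDiff ℝ 1 h) {c H τ u w z : ℝ}
    (hH : ∀ u, ‖deriv h u‖ ≤ H) (hw₀ : w ≠ 0) (hw : |w| ≤ 1 / 2) (hc₀ : 0 < c)
    (hc : c ≤ ‖∫ x, deriv γ x ∂segmentMeasure u w‖) (hτ : |τ| * H ≤ c / 4)
    (hz : z = 2 * τ * innerCov (segmentMeasure u w) (deriv γ) (deriv h) +
      τ ^ 2 * innerCov (segmentMeasure u w) (deriv h) (deriv h)) :
    max (ohIntegrand α (γ + τ • h) u w) 0 ≤ ohIntegrand α γ u w + |w| ^ (-α) * (α / 2 * z +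
      3 * (|τ| * H) * rpowNegConst (α / 2) ((c / 2) ^ 2) *
        (innerCov (segmentMeasure u w) (deriv γ) (deriv γ) + |z|)) := by
  have hγL := memLp_segmentMeasure hγ.continuous_deriv_one 2 u w
  have hhL := memLp_segmentMeasure hh.continuous_deriv_one 2 u w
  have hγ₁ := ae_of_all (segmentMeasure u w) harc
  have hhH := ae_of_all (segmentMeasure u w) hH
  have hhalf := half_le_norm_integral_add_smul (hγL.integrable one_le_two)
    (hhL.integrable one_le_two) hhH hc hτ
  have hspeed : ∀ v, |‖deriv (γ + τ • h) v‖ - 1| ≤ |τ| * H := fun v => by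
    rw [deriv_add_smul hγ hh, ← harc v]
    refine (abs_norm_sub_norm_le _ _).trans ?_
    rw [add_sub_cancel_left, norm_smul, Real.norm_eq_abs]
    exact mul_le_mul_of_nonneg_left (hH v) (abs_nonneg τ)
  have hmean₁ : ‖∫ x, deriv γ x ∂segmentMeasure u w‖ ≤ 1 := by
    simpa using norm_integral_le_of_norm_le_const (hγ₁.mono fun x hx => le_of_eq hx)
  have hγτ : ContDiff ℝ 1 (γ + τ • h) := hγ.add (hh.const_smul τ)
  have hmax := max_ohIntegrand_zero_le hα hγτ hspeed (by linarith) hw₀ hw (u := u)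
    (by rw [deriv_add_smul hγ hh]; linarith)
  rw [ohIntegrand_of_arcLengthParam α hγ harc u hw, ← mul_add, ← add_assoc]
  refine hmax.trans ?_
  rw [deriv_add_smul hγ hh]
  gcongr
  exact rpow_neg_integral_add_smul_le (by positivity) hc₀ hγL hhL hγ₁ hhH hc hτ hz

lemma mul_add_abs_mul_le_of_abs_le {p A β V ν S τ : ℝ} (hp : 0 ≤ p) (hA : 0 ≤ A) (hV : 0 ≤ V)
    (hVS : V ≤ S) (hβ : |β| ≤ (ν + V) / 2) (hτ : |τ| ≤ 1) :
    p * (2 * τ * β + τ ^ 2 * V) + |τ| * A * (ν + |2 * τ * β + τ ^ 2 * V|) ≤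
      2 * p * (τ * β) + |τ| * (A * ν) + τ ^ 2 * (p * S + A * (ν + 2 * S)) := by
  have hz : |2 * τ * β + τ ^ 2 * V| ≤ |τ| * (ν + 2 * S) := by
    calc |2 * τ * β + τ ^ 2 * V| ≤ |2 * τ * β| + |τ ^ 2 * V| := abs_add_le _ _
      _ = |τ| * (2 * |β| + |τ| * V) := by
          rw [abs_mul, abs_mul, abs_mul, abs_two, abs_of_nonneg hV, abs_pow]; ring
      _ ≤ |τ| * (2 * |β| + 1 * V) := by gcongr
      _ ≤ _ := mul_le_mul_of_nonneg_left (by linarith) (abs_nonneg τ)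
  calc p * (2 * τ * β + τ ^ 2 * V) + |τ| * A * (ν + |2 * τ * β + τ ^ 2 * V|)
      ≤ p * (2 * τ * β + τ ^ 2 * S) + |τ| * A * (ν + |τ| * (ν + 2 * S)) := by gcongr
    _ = _ := by linear_combination A * (ν + 2 * S) * abs_mul_abs_self τ

lemma max_ohIntegrand_add_smul_zero_le_covDensity {α : ℝ} (hα : 0 ≤ α) {γ h : ℝ → Rn n}
    (hγ : ContDiff ℝ 1 γ) (harc : ArcLengthParam γ) (hh : ContDiff ℝ 1 h) {c H K τ u w : ℝ}
    (hH : ∀ u, ‖deriv h u‖ ≤ H) (hK : ∀ u v, ‖deriv h u - deriv h v‖ ≤ K * |u - v|) (hw₀ : w ≠ 0)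
    (hw : |w| ≤ 1 / 2) (hc₀ : 0 < c) (hc : c ≤ ‖∫ x, deriv γ x ∂segmentMeasure u w‖)
    (hτ : |τ| * H ≤ c / 4) (hτ₁ : |τ| ≤ 1) :
    max (ohIntegrand α (γ + τ • h) u w) 0 ≤ ohIntegrand α γ u w + τ * (α * covDensity α γ h u w) +
      |τ| * (3 * rpowNegConst (α / 2) ((c / 2) ^ 2) * H * covDensity α γ γ u w) +
      τ ^ 2 * ((α / 2 * K ^ 2 + 3 * rpowNegConst (α / 2) ((c / 2) ^ 2) * H * (1 + 2 * K ^ 2)) *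
        (covDensity α γ γ u w + |w| ^ (2 - α))) := by
  have hγL := memLp_segmentMeasure hγ.continuous_deriv_one 2 u w
  have hhL := memLp_segmentMeasure hh.continuous_deriv_one 2 u w
  have hpow : |w| ^ (2 - α) = |w| ^ (-α) * w ^ 2 := by
    rw [← sq_abs w, ← Real.rpow_two, ← Real.rpow_add (abs_pos.2 hw₀)]
    ring_nf
  have hH₀ : 0 ≤ H := (norm_nonneg _).trans (hH u)
  have hA : 0 ≤ rpowNegConst (α / 2) ((c / 2) ^ 2) :=
    rpowNegConst_nonneg (by positivity) (by positivity)
  have hvar := innerCov_self_deriv_segmentMeasure_le hh hK u w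
  have hvar₀ := innerCov_self_nonneg hhL
  have hdefect := innerCov_self_nonneg hγL
  have hcov := abs_innerCov_le hγL hhL
  refine (max_ohIntegrand_add_smul_zero_le hα hγ harc hh hH hw₀ hw hc₀ hc hτ rfl).trans ?_
  rw [hpow, covDensity, covDensity]
  set A := rpowNegConst (α / 2) ((c / 2) ^ 2)
  set β := innerCov (segmentMeasure u w) (deriv γ) (deriv h)
  set V := innerCov (segmentMeasure u w) (deriv h) (deriv h)
  set ν := innerCov (segmentMeasure u w) (deriv γ) (deriv γ)
  have hq : 0 ≤ |w| ^ (-α) := by positivity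
  have hrem := mul_le_mul_of_nonneg_left (mul_add_abs_mul_le_of_abs_le (by positivity : 0 ≤ α / 2)
    (by positivity : 0 ≤ 3 * A * H) hvar₀ hvar hcov hτ₁) hq
  have hslack : 0 ≤ |w| ^ (-α) *
      (τ ^ 2 * (α / 2 * K ^ 2 * ν + 3 * A * H * (w ^ 2 + 2 * K ^ 2 * ν))) := by positivity
  linear_combination hrem + hslack

lemma ohIntegrand_nonneg_and_le {α : ℝ} (hα : 0 ≤ α) {γ : ℝ → Rn n} (hγ : ContDiff ℝ 1 γ)
    (harc : ArcLengthParam γ) {c u w : ℝ} (hw : |w| ≤ 1 / 2) (hc₀ : 0 < c)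
    (hc : c ≤ ‖∫ x, deriv γ x ∂segmentMeasure u w‖) :
    0 ≤ ohIntegrand α γ u w ∧
      ohIntegrand α γ u w ≤ α / 2 * (c ^ 2) ^ (-(α / 2) - 1) * covDensity α γ γ u w := by
  have hmean : ‖∫ x, deriv γ x ∂segmentMeasure u w‖ ≤ 1 := by
    simpa using norm_integral_le_of_norm_le_const
      (ae_of_all (segmentMeasure u w) fun x => (harc x).le)
  rw [ohIntegrand_of_arcLengthParam α hγ harc u hw, covDensity, innerCov_self]
  simp only [harc _, one_pow, integral_const, probReal_univ, one_smul]
  set x := ‖∫ x, deriv γ x ∂segmentMeasure u w‖ ^ 2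
  have hx₁ : x ≤ 1 := pow_le_one₀ (norm_nonneg _) hmean
  have hx : c ^ 2 ≤ x := pow_le_pow_left₀ hc₀.le hc 2
  have hx₀ : 0 < x := (by positivity : 0 < c ^ 2).trans_le hx
  refine ⟨mul_nonneg (by positivity) (sub_nonneg.2
    (Real.one_le_rpow_of_pos_of_le_one_of_nonpos hx₀ hx₁ (by linarith))), ?_⟩
  have hlip := abs_rpow_neg_sub_le (q := α / 2) (by positivity) (by positivity) hx (hx.trans hx₁)
  rw [Real.one_rpow, abs_sub_comm x, abs_of_nonneg (sub_nonneg.2 hx₁)] at hlip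
  calc |w| ^ (-α) * (x ^ (-(α / 2)) - 1)
      ≤ |w| ^ (-α) * (α / 2 * (c ^ 2) ^ (-(α / 2) - 1) * (1 - x)) := by
        gcongr
        exact (le_abs_self _).trans hlip
    _ = _ := by ring

/-! ### The first variation of the energy -/

lemma measurable_ohIntegrand {α : ℝ} {γ : ℝ → Rn n} (hγ : ContDiff ℝ 1 γ) :
    Measurable fun p : ℝ × ℝ => ohIntegrand α γ p.1 p.2 := by
  have : Measurable (deriv γ) := hγ.continuous_deriv_one.measurable
  have hcurve : Measurable γ := hγ.continuous.measurable
  have hmean := (continuous_integral_segmentMeasure hγ.continuous_deriv_one.norm).measurable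
  simp only [ohIntegrand, idist, arcLen_eq_abs_mul_integral hγ]
  fun_prop

lemma oharaE_eq_lintegral {α : ℝ} {γ : ℝ → Rn n} (hγ : ContDiff ℝ 1 γ) :
    oharaE α γ = ∫⁻ p, ENNReal.ofReal (ohIntegrand α γ p.1 p.2) ∂stripMeasure := by
  rw [oharaE, stripMeasure,
    lintegral_prod _ (measurable_ohIntegrand hγ).ennreal_ofReal.aemeasurable]

lemma oharaER_le_integral {α : ℝ} {γ : ℝ → Rn n} (hγ : ContDiff ℝ 1 γ) {Ψ : ℝ × ℝ → ℝ}
    (hΨ : Integrable Ψ stripMeasure)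
    (hle : ∀ᵐ p ∂stripMeasure, max (ohIntegrand α γ p.1 p.2) 0 ≤ Ψ p) :
    oharaER α γ ≤ ∫ p, Ψ p ∂stripMeasure := by
  have hΨ₀ : 0 ≤ᵐ[stripMeasure] Ψ := hle.mono fun p hp => (le_max_right _ _).trans hp
  rw [oharaER, oharaE_eq_lintegral hγ, integral_eq_lintegral_of_nonneg_ae hΨ₀ hΨ.1]
  refine ENNReal.toReal_mono hΨ.lintegral_lt_top.ne (lintegral_mono_ae ?_)
  exact hle.mono fun p hp => ENNReal.ofReal_le_ofReal ((le_max_left _ _).trans hp)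

section Strip

variable {α : ℝ} {γ h : ℝ → Rn n}

lemma integrable_ohIntegrand (hα : 0 ≤ α) (hγ : ContDiff ℝ 1 γ) (harc : ArcLengthParam γ) {c : ℝ}
    (hc₀ : 0 < c) (hc : ∀ u w, |w| ≤ 1 / 2 → c ≤ ‖∫ x, deriv γ x ∂segmentMeasure u w‖)
    (hcov : Integrable (fun p : ℝ × ℝ => covDensity α γ γ p.1 p.2) stripMeasure) :
    Integrable (fun p : ℝ × ℝ => ohIntegrand α γ p.1 p.2) stripMeasure := by
  refine (hcov.const_mul (α / 2 * (c ^ 2) ^ (-(α / 2) - 1))).mono'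
    (measurable_ohIntegrand hγ).aestronglyMeasurable ?_
  filter_upwards [ae_stripMeasure] with p hp
  obtain ⟨hnonneg, hle⟩ :=
    ohIntegrand_nonneg_and_le hα hγ harc hp.2.le hc₀ (hc p.1 p.2 hp.2.le)
  rwa [Real.norm_of_nonneg hnonneg]

lemma oharaER_eq_integral (hα : 0 ≤ α) (hγ : ContDiff ℝ 1 γ) (harc : ArcLengthParam γ) {c : ℝ}
    (hc₀ : 0 < c) (hc : ∀ u w, |w| ≤ 1 / 2 → c ≤ ‖∫ x, deriv γ x ∂segmentMeasure u w‖) :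
    oharaER α γ = ∫ p, ohIntegrand α γ p.1 p.2 ∂stripMeasure := by
  rw [oharaER, oharaE_eq_lintegral hγ, integral_eq_lintegral_of_nonneg_ae _
    (measurable_ohIntegrand hγ).aestronglyMeasurable]
  filter_upwards [ae_stripMeasure] with p hp
  exact (ohIntegrand_nonneg_and_le hα hγ harc hp.2.le hc₀ (hc p.1 p.2 hp.2.le)).1

lemma integrable_covDensity (hα : α < 3) (hγ : ContDiff ℝ 1 γ) (hh : ContDiff ℝ 1 h) {K : ℝ}
    (hK : ∀ u v, ‖deriv h u - deriv h v‖ ≤ K * |u - v|)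
    (hcov : Integrable (fun p : ℝ × ℝ => covDensity α γ γ p.1 p.2) stripMeasure) :
    Integrable (fun p : ℝ × ℝ => covDensity α γ h p.1 p.2) stripMeasure := by
  have hw := integrable_stripMeasure_abs_rpow (by linarith : -1 < 2 - α)
  refine ((hcov.add (hw.const_mul (K ^ 2))).div_const 2).mono'
    (measurable_covDensity hγ hh).aestronglyMeasurable ?_
  filter_upwards [ae_stripMeasure] with p hp
  exact abs_covDensity_le hγ hh hK p.1 hp.1

lemma exists_oharaER_add_smul_sub_le (hα : 0 ≤ α) (hα₃ : α < 3) (hγ : ContDiff ℝ 1 γ)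
    (harc : ArcLengthParam γ) (hh : ContDiff ℝ 1 h) {c H K : ℝ} (hH : ∀ u, ‖deriv h u‖ ≤ H)
    (hK : ∀ u v, ‖deriv h u - deriv h v‖ ≤ K * |u - v|) (hc₀ : 0 < c)
    (hc : ∀ u w, |w| ≤ 1 / 2 → c ≤ ‖∫ x, deriv γ x ∂segmentMeasure u w‖)
    (hcov : Integrable (fun p : ℝ × ℝ => covDensity α γ γ p.1 p.2) stripMeasure) :
    ∃ M, ∀ τ, |τ| * H ≤ c / 4 → |τ| ≤ 1 → oharaER α (γ + τ • h) - oharaER α γ ≤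
      τ * (α * ∫ p, covDensity α γ h p.1 p.2 ∂stripMeasure) +
      |τ| * (3 * rpowNegConst (α / 2) ((c / 2) ^ 2) * H *
        ∫ p, covDensity α γ γ p.1 p.2 ∂stripMeasure) + τ ^ 2 * M := by
  have hint := ((integrable_covDensity hα₃ hγ hh hK hcov).const_mul α)
  have hrem := hcov.fun_add (integrable_stripMeasure_abs_rpow (by linarith : -1 < 2 - α))
  set A := rpowNegConst (α / 2) ((c / 2) ^ 2)
  set B := α / 2 * K ^ 2 + 3 * A * H * (1 + 2 * K ^ 2)
  refine ⟨B * ∫ p : ℝ × ℝ, (covDensity α γ γ p.1 p.2 + |p.2| ^ (2 - α)) ∂stripMeasure,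
    fun τ hτ hτ₁ => ?_⟩
  have hτh : ContDiff ℝ 1 (γ + τ • h) := hγ.add (hh.const_smul τ)
  have h₀ := integrable_ohIntegrand hα hγ harc hc₀ hc hcov
  have h₁ := h₀.fun_add (hint.const_mul τ)
  have h₂ := h₁.fun_add ((hcov.const_mul (3 * A * H)).const_mul |τ|)
  have hle := oharaER_le_integral hτh (h₂.fun_add ((hrem.const_mul B).const_mul (τ ^ 2))) <| by
    filter_upwards [ae_stripMeasure] with p hp
    exact max_ohIntegrand_add_smul_zero_le_covDensity hα hγ harc hh hH hK hp.1 hp.2.le hc₀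
      (hc _ _ hp.2.le) hτ hτ₁
  rw [integral_add h₂ ((hrem.const_mul B).const_mul (τ ^ 2)),
    integral_add h₁ ((hcov.const_mul (3 * A * H)).const_mul |τ|),
    integral_add h₀ (hint.const_mul τ), ← oharaER_eq_integral hα hγ harc hc₀ hc] at hle
  simp only [integral_const_mul] at hle
  linarith

end Strip

lemma abs_sub_le_of_tendsto_of_eventually_sub_le {Φ : ℝ → ℝ} {Φ₀ d b e k : ℝ}
    (hd : Tendsto (fun τ => (Φ τ - Φ₀) / τ) (𝓝[≠] 0) (𝓝 d))
    (hle : ∀ᶠ τ in 𝓝[≠] 0, Φ τ - Φ₀ ≤ τ * b + |τ| * e + τ ^ 2 * k) : |d - b| ≤ e := by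
  have hlim : ∀ s, Tendsto (fun τ : ℝ => s + τ * k) (𝓝 0) (𝓝 s) := fun s => by
    have hcont : Continuous fun τ : ℝ => s + τ * k := by fun_prop
    simpa using hcont.tendsto 0
  have hgt : 𝓝[>] (0 : ℝ) ≤ 𝓝[≠] 0 := nhdsWithin_mono _ fun x hx => ne_of_gt hx
  have hlt : 𝓝[<] (0 : ℝ) ≤ 𝓝[≠] 0 := nhdsWithin_mono _ fun x hx => ne_of_lt hx
  have hupper : d ≤ b + e := by
    refine le_of_tendsto_of_tendsto (hd.mono_left hgt)
      ((hlim (b + e)).mono_left nhdsWithin_le_nhds) ?_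
    filter_upwards [hle.filter_mono hgt, self_mem_nhdsWithin] with τ hτle hτ
    have hτ : 0 < τ := hτ
    rw [div_le_iff₀ hτ]
    rw [abs_of_pos hτ] at hτle
    linarith
  have hlower : b - e ≤ d := by
    refine le_of_tendsto_of_tendsto ((hlim (b - e)).mono_left nhdsWithin_le_nhds)
      (hd.mono_left hlt) ?_
    filter_upwards [hle.filter_mono hlt, self_mem_nhdsWithin] with τ hτle hτ
    have hτ : τ < 0 := hτ
    rw [le_div_iff_of_neg hτ]
    rw [abs_of_neg hτ] at hτle
    linarith
  exact abs_le.2 ⟨by linarith, by linarith⟩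

lemma exists_abs_sub_integral_covDensity_le {α : ℝ} (hα : 0 ≤ α) (hα₃ : α < 3) {γ : ℝ → Rn n}
    (hγ : ContDiff ℝ 1 γ) (hP : Function.Periodic γ 1) (hinj : PerInjective γ)
    (harc : ArcLengthParam γ)
    (hcov : Integrable (fun p : ℝ × ℝ => covDensity α γ γ p.1 p.2) stripMeasure) :
    ∃ C, ∀ (h : ℝ → Rn n) (H K d : ℝ), ContDiff ℝ 1 h → (∀ u, ‖deriv h u‖ ≤ H) →
      (∀ u v, ‖deriv h u - deriv h v‖ ≤ K * |u - v|) → HasDirDeriv (oharaER α) γ h d →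
      |d - α * ∫ p, covDensity α γ h p.1 p.2 ∂stripMeasure| ≤ C * H := by
  have hreg : RegularCurve γ := fun u => by simp [← norm_ne_zero_iff, harc u]
  obtain ⟨c, hc₀, hc⟩ := exists_pos_le_norm_integral_deriv_segmentMeasure hγ hP hinj hreg
  refine ⟨3 * rpowNegConst (α / 2) ((c / 2) ^ 2) * ∫ p, covDensity α γ γ p.1 p.2 ∂stripMeasure,
    fun h H K d hh hH hK hd => ?_⟩
  obtain ⟨M, hM⟩ := exists_oharaER_add_smul_sub_le hα hα₃ hγ harc hh hH hK hc₀ hc hcov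
  rw [mul_right_comm]
  refine abs_sub_le_of_tendsto_of_eventually_sub_le hd (k := M) ?_
  have hsmall : ∀ᶠ τ in 𝓝 (0 : ℝ), |τ| * H < c / 4 ∧ |τ| < 1 := by
    have hcont : Continuous fun τ : ℝ => |τ| * H := by fun_prop
    exact ((hcont.tendsto 0).eventually_lt_const (by simpa using hc₀)).and
      ((continuous_abs.tendsto (0 : ℝ)).eventually_lt_const (by simp))
  filter_upwards [hsmall.filter_mono nhdsWithin_le_nhds] with τ hτ
  exact hM τ hτ.1.le hτ.2.le

/-! ### Variations by waves -/

/-- The plane wave of frequency `μ`, phase `θ` and amplitude `v`; these are the test variations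
that read off the Fourier coefficients of a curve. -/
def cosWave {E : Type*} [AddCommGroup E] [Module ℝ E] (μ θ : ℝ) (v : E) (u : ℝ) : E :=
  Real.cos (μ * u + θ) • v

section CosWave

variable {E : Type*} [NormedAddCommGroup E]

section NormedSpace

variable [NormedSpace ℝ E] (μ θ : ℝ) (v : E)

lemma contDiff_cosWave {m : WithTop ℕ∞} : ContDiff ℝ m (cosWave μ θ v) := by
  unfold cosWave
  fun_prop

lemma deriv_cosWave : deriv (cosWave μ θ v) = cosWave μ (θ + Real.pi / 2) (μ • v) := by
  ext1 u
  have hphase : HasDerivAt (fun u : ℝ => μ * u + θ) μ u := by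
    simpa using ((hasDerivAt_id u).const_mul μ).add_const θ
  refine (hphase.cos.smul_const v).deriv.trans ?_
  rw [cosWave, ← add_assoc, Real.cos_add_pi_div_two, smul_smul]

lemma deriv_deriv_cosWave : deriv (deriv (cosWave μ θ v)) = -μ ^ 2 • cosWave μ θ v := by
  ext1 u
  rw [deriv_cosWave, deriv_cosWave, add_assoc, add_halves, cosWave, ← add_assoc, Real.cos_add_pi,
    Pi.smul_apply, cosWave, smul_smul, smul_smul, smul_smul]
  ring_nf

lemma norm_cosWave_le (u : ℝ) : ‖cosWave μ θ v u‖ ≤ ‖v‖ := by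
  rw [cosWave, norm_smul]
  exact mul_le_of_le_one_left (norm_nonneg v) (Real.abs_cos_le_one _)

lemma norm_deriv_cosWave_le (u : ℝ) : ‖deriv (cosWave μ θ v) u‖ ≤ |μ| * ‖v‖ := by
  rw [deriv_cosWave]
  exact (norm_cosWave_le _ _ _ u).trans_eq (norm_smul μ v)

lemma norm_deriv_cosWave_sub_le (u w : ℝ) :
    ‖deriv (cosWave μ θ v) u - deriv (cosWave μ θ v) w‖ ≤ |μ| * (|μ| * ‖v‖) * |u - w| := by
  rw [deriv_cosWave]
  refine Convex.norm_image_sub_le_of_norm_deriv_le (s := univ)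
    (fun x _ => (contDiff_cosWave _ _ _).differentiable one_ne_zero x) (fun x _ => ?_) convex_univ
    (mem_univ w) (mem_univ u)
  exact (norm_deriv_cosWave_le _ _ _ x).trans_eq (by rw [norm_smul, Real.norm_eq_abs])

lemma periodic_cosWave (k : ℤ) : Function.Periodic (cosWave (2 * Real.pi * k) θ v) 1 := fun u => by
  rw [cosWave, cosWave, mul_add, mul_one, add_right_comm, mul_comm (2 * Real.pi) (k : ℝ),
    Real.cos_add_int_mul_two_pi]

lemma cosWave_add_add_cosWave_sub (u w : ℝ) :
    cosWave μ θ v (u + w) + cosWave μ θ v (u - w) = (2 * Real.cos (μ * w)) • cosWave μ θ v u := by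
  have hadd : μ * (u + w) + θ = μ * u + θ + μ * w := by ring
  have hsub : μ * (u - w) + θ = μ * u + θ - μ * w := by ring
  rw [cosWave, cosWave, cosWave, ← add_smul, smul_smul, hadd, hsub, Real.cos_add, Real.cos_sub]
  ring_nf

end NormedSpace

variable [InnerProductSpace ℝ E] {f g : ℝ → E} {T : ℝ}

lemma integral_inner_deriv_eq_neg (hf : ContDiff ℝ 1 f) (hg : ContDiff ℝ 1 g)
    (hfP : Function.Periodic f T) (hgP : Function.Periodic g T) :
    ∫ u in (0 : ℝ)..T, ⟪deriv f u, g u⟫ = -∫ u in (0 : ℝ)..T, ⟪f u, deriv g u⟫ := by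
  have hf' := hf.continuous_deriv_one
  have hg' := hg.continuous_deriv_one
  have hf₀ := hf.continuous
  have hg₀ := hg.continuous
  have hprod : ∀ u, HasDerivAt (fun u => ⟪f u, g u⟫) (⟪f u, deriv g u⟫ + ⟪deriv f u, g u⟫) u :=
    fun u => (hf.differentiable one_ne_zero u).hasDerivAt.inner ℝ
      (hg.differentiable one_ne_zero u).hasDerivAt
  have hftc := intervalIntegral.integral_eq_sub_of_hasDerivAt (a := 0) (b := T)
    (fun u _ => hprod u) (Continuous.intervalIntegrable (by fun_prop) _ _)
  rw [intervalIntegral.integral_add (Continuous.intervalIntegrable (by fun_prop) _ _)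
    (Continuous.intervalIntegrable (by fun_prop) _ _), hfP.eq, hgP.eq, sub_self] at hftc
  linarith

lemma integral_inner_translation_sub (hf : Continuous f) (hg : Continuous g)
    (hfP : Function.Periodic f T) (hgP : Function.Periodic g T) (w : ℝ) :
    ∫ u in (0 : ℝ)..T, ⟪f (u + w) - f u, g (u + w) - g u⟫ =
      ∫ u in (0 : ℝ)..T, ⟪f u, (2 : ℝ) • g u - (g (u + w) + g (u - w))⟫ := by
  have hP : Function.Periodic (fun u => ⟪f u, g u - g (u - w)⟫) T := fun u => by
    simp only [hfP u, hgP u, add_sub_right_comm u T w, hgP (u - w)]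
  have hshift := integral_comp_add_of_periodic hP w
  simp only [add_sub_cancel_right] at hshift
  simp only [inner_sub_left]
  rw [intervalIntegral.integral_sub (Continuous.intervalIntegrable (by fun_prop) _ _)
    (Continuous.intervalIntegrable (by fun_prop) _ _), hshift, ← intervalIntegral.integral_sub
    (Continuous.intervalIntegrable (by fun_prop) _ _)
    (Continuous.intervalIntegrable (by fun_prop) _ _)]
  refine intervalIntegral.integral_congr fun u _ => ?_
  simp only [← inner_sub_right, two_smul]
  congr 1
  abel

variable [CompleteSpace E] (hf : ContDiff ℝ 1 f) (hP : Function.Periodic f 1) (k : ℤ) (θ : ℝ)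
  (v : E)
include hf hP

lemma integral_covDensity_cosWave (α : ℝ) {w : ℝ} (hw : w ≠ 0) :
    ∫ u in (0 : ℝ)..1, covDensity α f (cosWave (2 * Real.pi * k) θ v) u w =
      |w| ^ (-(α + 2)) * cosDefect (2 * Real.pi * k * w) *
        ∫ u in (0 : ℝ)..1, ⟪f u, cosWave (2 * Real.pi * k) θ v u⟫ := by
  set g := cosWave (2 * Real.pi * k) θ v
  have hg : ContDiff ℝ 1 g := contDiff_cosWave _ _ _
  have hgP : Function.Periodic g 1 := periodic_cosWave _ _ _
  have hf₀ := hf.continuous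
  have hg₀ := hg.continuous
  have hff' : Continuous fun x => ⟪deriv f x, deriv g x⟫ :=
    hf.continuous_deriv_one.inner hg.continuous_deriv_one
  have hmean : Continuous fun u => ∫ x, ⟪deriv f x, deriv g x⟫ ∂segmentMeasure u w :=
    (continuous_integral_segmentMeasure hff').comp (Continuous.prodMk_left w)
  have hg' : ContDiff ℝ 1 (deriv g) := by
    rw [deriv_cosWave]
    exact contDiff_cosWave _ _ _
  simp only [covDensity_eq hf hg _ hw]
  rw [intervalIntegral.integral_const_mul, intervalIntegral.integral_sub
    (Continuous.intervalIntegrable (by fun_prop) _ _)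
    (Continuous.intervalIntegrable (by fun_prop) _ _), intervalIntegral.integral_const_mul,
    integral_integral_segmentMeasure hff' (fun u => by
      simp only [periodic_deriv hP u, periodic_deriv hgP u]),
    integral_inner_deriv_eq_neg hf hg' hP (periodic_deriv hgP), deriv_deriv_cosWave,
    integral_inner_translation_sub hf₀ hg₀ hP hgP]
  simp only [g, cosWave_add_add_cosWave_sub, ← sub_smul, Pi.smul_apply, real_inner_smul_right,
    intervalIntegral.integral_const_mul, cosDefect]
  ring

lemma integral_stripMeasure_covDensity_cosWave {α : ℝ}
    (hint : Integrable (fun p : ℝ × ℝ => covDensity α f (cosWave (2 * Real.pi * k) θ v) p.1 p.2)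
      stripMeasure) :
    ∫ p, covDensity α f (cosWave (2 * Real.pi * k) θ v) p.1 p.2 ∂stripMeasure =
      multiplier α k * ∫ u in (0 : ℝ)..1, ⟪f u, cosWave (2 * Real.pi * k) θ v u⟫ := by
  rw [stripMeasure] at hint ⊢
  rw [integral_prod_symm _ hint, multiplier, ← integral_mul_const]
  refine integral_congr_ae ?_
  filter_upwards [ae_restrict_of_ae (Measure.ae_ne volume (0 : ℝ))] with w hw
  rw [← intervalIntegral.integral_of_le zero_le_one,
    integral_covDensity_cosWave hf hP k θ v α hw]

end CosWave

/-- Choose the phase to be the argument of the Fourier coefficient. -/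
lemma exists_integral_inner_cosWave_eq_norm_fCoef {γ : ℝ → Rn n} (hγ : Continuous γ) (k : ℤ)
    (j : Fin n) : ∃ θ, ∫ u in (0 : ℝ)..1,
      ⟪γ u, cosWave (2 * Real.pi * k) θ (EuclideanSpace.single j 1) u⟫ = ‖fCoef γ k j‖ := by
  obtain ⟨θ, hθ⟩ : ∃ θ : ℝ, Complex.exp (-θ * Complex.I) * fCoef γ k j = ‖fCoef γ k j‖ := by
    have hpolar := Complex.norm_mul_exp_arg_mul_I (fCoef γ k j)
    refine ⟨(fCoef γ k j).arg, ?_⟩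
    nth_rw 2 [← hpolar]
    rw [mul_left_comm, ← Complex.exp_add]
    simp
  refine ⟨θ, ?_⟩
  have hγj : Continuous fun u => γ u j := by fun_prop
  have hre := congrArg Complex.reCLM hθ
  rw [Complex.reCLM_apply, Complex.reCLM_apply, Complex.ofReal_re] at hre
  rw [← hre, fCoef, ← intervalIntegral.integral_const_mul, ← Complex.reCLM_apply,
    ← ContinuousLinearMap.intervalIntegral_comp_comm _
      (Continuous.intervalIntegrable (by fun_prop) _ _)]
  refine intervalIntegral.integral_congr fun u _ => ?_
  have hexp : Complex.exp (-θ * Complex.I) *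
      (γ u j * Complex.exp (-2 * Real.pi * Complex.I * k * u)) =
        (γ u j : ℂ) * Complex.exp ((-(2 * Real.pi * k * u + θ) : ℝ) * Complex.I) := by
    rw [mul_left_comm, ← Complex.exp_add]
    push_cast
    ring_nf
  simp only [hexp, Complex.reCLM_apply, Complex.re_ofReal_mul, Complex.exp_ofReal_mul_I_re,
    Real.cos_neg, cosWave, real_inner_smul_right, EuclideanSpace.inner_single_right, one_mul,
    conj_trivial]
  ring

/-! ### Stationary points -/

/-- `γ` is a stationary point of `E^α + λL`, tested only against smooth variations. By arc-length
parametrization, the first variation of the length is `∫ ⟪γ', h'⟫`. -/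
def IsStationaryCurve (α lam : ℝ) (γ : ℝ → Rn n) : Prop :=
  ∀ h : ℝ → Rn n, Function.Periodic h 1 → ContDiff ℝ (⊤ : ℕ∞) h →
    ∃ d, HasDirDeriv (oharaER α) γ h d ∧
      d + lam * ∫ u in Ioc (0 : ℝ) 1, ⟪deriv γ u, deriv h u⟫ = 0

section Stationary

variable {α lam : ℝ} {γ : ℝ → Rn n}

lemma abs_integral_inner_deriv_le (harc : ArcLengthParam γ) {h : ℝ → Rn n} {H : ℝ}
    (hH : ∀ u, ‖deriv h u‖ ≤ H) : |∫ u in Ioc (0 : ℝ) 1, ⟪deriv γ u, deriv h u⟫| ≤ H := by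
  rw [← Real.norm_eq_abs]
  refine (norm_setIntegral_le_of_norm_le_const (C := H) (by simp) fun u _ => ?_).trans_eq (by simp)
  calc ‖⟪deriv γ u, deriv h u⟫‖ ≤ ‖deriv γ u‖ * ‖deriv h u‖ := norm_inner_le_norm _ _
    _ ≤ H := by rw [harc u, one_mul]; exact hH u

lemma IsStationaryCurve.exists_abs_integral_covDensity_le (hstat : IsStationaryCurve α lam γ)
    (hα : α ∈ Ioo (1 : ℝ) 3) (hγ : ContDiff ℝ 1 γ) (hS : MemHF ((α + 1) / 2) γ)
    (hinj : PerInjective γ) (harc : ArcLengthParam γ) :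
    ∃ C, ∀ (h : ℝ → Rn n) (H K : ℝ), Function.Periodic h 1 → ContDiff ℝ (⊤ : ℕ∞) h →
      (∀ u, ‖deriv h u‖ ≤ H) → (∀ u v, ‖deriv h u - deriv h v‖ ≤ K * |u - v|) →
      |∫ p, covDensity α γ h p.1 p.2 ∂stripMeasure| ≤ C * H := by
  have hα₀ : 0 < α := one_pos.trans hα.1
  obtain ⟨C, hC⟩ := exists_abs_sub_integral_covDensity_le hα₀.le hα.2 hγ hS.1 hinj harc
    (integrable_covDensity_self hα hγ hS)
  refine ⟨(|lam| + C) / α, fun h H K hP hh hH hK => ?_⟩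
  obtain ⟨d, hd, hEL⟩ := hstat h hP hh
  set I := ∫ p, covDensity α γ h p.1 p.2 ∂stripMeasure
  have hrem : |d - α * I| ≤ C * H := hC h H K d (hh.of_le (mod_cast le_top)) hH hK hd
  have hd : |d| ≤ |lam| * H := by
    rw [eq_neg_of_add_eq_zero_left hEL, abs_neg, abs_mul]
    exact mul_le_mul_of_nonneg_left (abs_integral_inner_deriv_le harc hH) (abs_nonneg _)
  rw [div_mul_eq_mul_div, le_div_iff₀ hα₀]
  calc |I| * α = |d - (d - α * I)| := by
        rw [sub_sub_cancel, abs_mul, abs_of_pos hα₀, mul_comm]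
    _ ≤ |d| + |d - α * I| := abs_sub _ _
    _ ≤ (|lam| + C) * H := by linarith

lemma IsStationaryCurve.exists_norm_fCoef_le (hstat : IsStationaryCurve α lam γ)
    (hα : α ∈ Ioo (1 : ℝ) 3) (hγ : ContDiff ℝ 1 γ) (hS : MemHF ((α + 1) / 2) γ)
    (hinj : PerInjective γ) (harc : ArcLengthParam γ) :
    ∃ C, ∀ (k : ℤ) (j : Fin n), k ≠ 0 → ‖fCoef γ k j‖ ≤ C * |(k : ℝ)| ^ (-α) := by
  obtain ⟨C, hC⟩ := hstat.exists_abs_integral_covDensity_le hα hγ hS hinj harc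
  obtain ⟨c, hc₀, hc⟩ := exists_mul_rpow_le_multiplier hα
  refine ⟨2 * Real.pi * C / c, fun k j hk => ?_⟩
  have hk₁ : 1 ≤ |(k : ℝ)| := by exact_mod_cast Int.one_le_abs hk
  have hk₀ : 0 < |(k : ℝ)| := one_pos.trans_le hk₁
  obtain ⟨θ, hθ⟩ := exists_integral_inner_cosWave_eq_norm_fCoef hγ.continuous k j
  set h := cosWave (2 * Real.pi * k) θ (EuclideanSpace.single j (1 : ℝ))
  have hh {m : WithTop ℕ∞} : ContDiff ℝ m h := contDiff_cosWave _ _ _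
  have hK := norm_deriv_cosWave_sub_le (2 * Real.pi * k) θ (EuclideanSpace.single j (1 : ℝ))
  have hint := integrable_covDensity hα.2 hγ hh hK (integrable_covDensity_self hα hγ hS)
  have hmult : c * |(k : ℝ)| ^ (α + 1) * ‖fCoef γ k j‖ ≤ C * (2 * Real.pi * |(k : ℝ)|) :=
    calc c * |(k : ℝ)| ^ (α + 1) * ‖fCoef γ k j‖
        ≤ multiplier α k * ‖fCoef γ k j‖ := by gcongr; exact hc k hk₁
      _ = ∫ p, covDensity α γ h p.1 p.2 ∂stripMeasure := by
        rw [integral_stripMeasure_covDensity_cosWave hγ hS.1 k θ _ hint, hθ]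
      _ ≤ C * (|2 * Real.pi * k| * ‖EuclideanSpace.single j (1 : ℝ)‖) := (le_abs_self _).trans
        (hC h _ _ (periodic_cosWave _ _ k) hh (norm_deriv_cosWave_le _ _ _) hK)
      _ = C * (2 * Real.pi * |(k : ℝ)|) := by
        rw [abs_mul, abs_of_pos Real.two_pi_pos, PiLp.norm_single, norm_one, mul_one]
  rw [Real.rpow_neg hk₀.le, ← div_eq_mul_inv, div_div, le_div_iff₀ (by positivity)]
  rw [Real.rpow_add_one hk₀.ne'] at hmult
  refine le_of_mul_le_mul_right ?_ hk₀
  linarith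

end Stationary

lemma memH1_of_contDiff_two {σ : ℝ} (hσ : σ < 1) {h : ℝ → Rn n} (hP : Function.Periodic h 1)
    (hh : ContDiff ℝ 2 h) : MemH1 σ h := by
  have hh' : ContDiff ℝ 1 (deriv h) := (contDiff_succ_iff_deriv.1 hh).2.2
  refine ⟨hP, hh.of_le one_le_two, ?_⟩
  obtain ⟨K, hK⟩ := ((periodic_deriv (periodic_deriv hP)).isBounded_of_continuous one_ne_zero
    hh'.continuous_deriv_one).exists_norm_le
  have hlip : ∀ u w, ‖deriv h (u + w) - deriv h u‖ ≤ K * |w| := fun u w => by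
    simpa using Convex.norm_image_sub_le_of_norm_deriv_le (s := univ)
      (fun x _ => hh'.differentiable one_ne_zero x) (fun x _ => hK _ (mem_range_self x))
      convex_univ (mem_univ u) (mem_univ (u + w))
  have hpoint : ∀ u w, ‖deriv h (u + w) - deriv h u‖ ^ 2 / |w| ^ (1 + 2 * σ) ≤
      K ^ 2 * |w| ^ (1 - 2 * σ) := fun u w => by
    rcases eq_or_ne w 0 with rfl | hw
    · simp only [add_zero, sub_self, norm_zero, zero_pow two_ne_zero, zero_div]
      positivity
    have hw₀ : 0 < |w| := abs_pos.2 hw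
    rw [div_le_iff₀ (by positivity), mul_assoc, ← Real.rpow_add hw₀, add_comm (1 - 2 * σ),
      add_add_sub_cancel, one_add_one_eq_two, Real.rpow_two, ← mul_pow]
    exact pow_le_pow_left₀ (norm_nonneg _) (hlip u w) 2
  have hint : IntegrableOn (fun w : ℝ => K ^ 2 * |w| ^ (1 - 2 * σ))
      (Ioo (-(1 : ℝ) / 2) (1 / 2)) :=
    (integrableOn_Ioo_abs_rpow (by linarith)).const_mul _
  calc gagliardoSq σ (deriv h)
      ≤ ∫⁻ _ in Ioc (0 : ℝ) 1, ∫⁻ w in Ioo (-(1 : ℝ) / 2) (1 / 2),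
          ENNReal.ofReal (K ^ 2 * |w| ^ (1 - 2 * σ)) :=
        lintegral_mono fun u => lintegral_mono fun w => ENNReal.ofReal_le_ofReal (hpoint u w)
    _ = ∫⁻ w in Ioo (-(1 : ℝ) / 2) (1 / 2), ENNReal.ofReal (K ^ 2 * |w| ^ (1 - 2 * σ)) := by simp
    _ < ⊤ := hint.lintegral_lt_top

theorem statement16_general {α lam : ℝ} (hα : α ∈ Ioo (1 : ℝ) 3) {γ : ℝ → Rn n}
    (hγ : ContDiff ℝ 1 γ) (hS : MemHF ((α + 1) / 2) γ) (hinj : PerInjective γ)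
    (harc : ArcLengthParam γ) (hstat : IsStationaryCurve α lam γ) {ε : ℝ} (hε : 0 < ε) :
    MemHF (α - 1 / 2 - ε) γ := by
  obtain ⟨C, hC⟩ := hstat.exists_norm_fCoef_le hα hγ hS hinj harc
  exact memHF_of_norm_fCoef_le hS.1 hγ.continuous (sub_lt_self _ hε) hC

/-- A stationary point `γ ∈ H^{(α+1)/2,2}` of `E^α + λL` (injective,
arc-length) belongs to `H^{α−1/2−ε,2}` for every `ε > 0`. -/
theorem statement16 {n : ℕ} (hn : 2 ≤ n) {α lam : ℝ} (hα : α ∈ Ioo (2:ℝ) 3) (hlam : 0 < lam)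
    {γ : ℝ → Rn n} (hγ : MemHF ((α + 1) / 2) γ) (hinj : PerInjective γ)
    (harc : ArcLengthParam γ)
    (hstat : ∀ h : ℝ → Rn n, MemH1 ((α - 1) / 2) h →
      ∃ d : ℝ, HasDirDeriv (oharaER α) γ h d ∧
        d + lam * ∫ u in Ioc (0:ℝ) 1, ⟪deriv γ u, deriv h u⟫ = 0) :
    ∀ ε > (0:ℝ), MemHF (α - 1/2 - ε) γ := fun _ hε =>
  statement16_general ⟨one_lt_two.trans hα.1, hα.2⟩ (hγ.contDiff_one (by linarith [hα.1])) hγ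
    hinj harc (fun h hP hh => hstat h (memH1_of_contDiff_two (by linarith [hα.2]) hP
      (contDiff_infty.1 hh 2))) hε

end
end

section
/- Let s ∈ (1/2,1), c > 0, M > 0 and n ≥ 1. There exists a constant C = C(s,c,M,n) < ∞ such that for all f, g ∈ H^{s,2}(ℝ/ℤ,ℝⁿ) with |f(u)| ≥ c and |g(u)| ≥ c for all u and ‖f‖_{H^{s,2}} ≤ M, ‖g‖_{H^{s,2}} ≤ M, the scalar functions |f|, |g| belong to H^{s,2}(ℝ/ℤ,ℝ) and ‖ |f| − |g| ‖_{H^{s,2}} ≤ C·‖f − g‖_{H^{s,2}}. -/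
open MeasureTheory Filter Set
open scoped RealInnerProductSpace ENNReal Topology

noncomputable section

variable {n : ℕ}

/-!
The Gagliardo seminorm of `f` is the `L²` norm of the increments `f (u + w) - f u` for the measure
`|w|^{-(1+2s)} du dw`, so it suffices to bound the increments of `|f| - |g|` pointwise. With
`m a b = (a + b) / (|a| + |b|)` one has `|a| - |b| = ⟪a - b, m a b⟫`. The vectors `m a b` have norm
at most `1`, and `(|a| + |b|) |m a' b' - m a b| ≤ 2 (|a' - a| + |b' - b|)`. Hence, `Δ` denoting an
increment, `|Δ(|f| - |g|)| ≤ |Δ(f - g)| + (2 |f - g| / (|f| + |g|)) (|Δf| + |Δg|)`.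

The factor `|f - g|` is controlled by the embedding `H^{s,2} ⊆ L^∞`, which is where `s > 1/2`
enters: when an interval of length `r` is halved, the normalized `L²` norm grows by at most
`2 r^{s-1/2} [f]_{H^{s,2}}`, which sums to a geometric series over dyadic `r`, and Lebesgue
differentiation turns the bound on averages into a bound almost everywhere.
-/

section ProbabilityAverages

open scoped ProbabilityTheory

variable {α E : Type*} [MeasurableSpace α] [NormedAddCommGroup E]

theorem eLpNorm_two_sq (f : α → E) (μ : Measure α) :
    eLpNorm f 2 μ ^ 2 = ∫⁻ x, ‖f x‖ₑ ^ 2 ∂μ := by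
  have h := eLpNorm_nnreal_pow_eq_lintegral (f := f) (μ := μ) (p := 2) two_ne_zero
  simpa only [NNReal.coe_ofNat, ENNReal.coe_ofNat, ENNReal.rpow_ofNat] using h

theorem sqrt_integral_norm_sq {f : α → E} {μ : Measure α} (hf : AEStronglyMeasurable f μ) :
    √(∫ x, ‖f x‖ ^ 2 ∂μ) = (eLpNorm f 2 μ).toReal := by
  have hsq : ∫ x, ‖f x‖ ^ 2 ∂μ = (eLpNorm f 2 μ).toReal ^ 2 := by
    rw [integral_eq_lintegral_of_nonneg_ae (f := fun x => ‖f x‖ ^ 2)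
      (.of_forall fun x => sq_nonneg ‖f x‖) (hf.norm.pow 2), ← ENNReal.toReal_pow, eLpNorm_two_sq]
    simp only [ENNReal.ofReal_pow (norm_nonneg _), ofReal_norm]
  rw [hsq, Real.sqrt_sq ENNReal.toReal_nonneg]

theorem eLpNorm_le_eLpNorm_add_eLpNorm_prod_sub {μ ν : Measure α} [IsProbabilityMeasure μ]
    [IsProbabilityMeasure ν] {f : α → E} (hμ : AEStronglyMeasurable f μ)
    (hν : AEStronglyMeasurable f ν) {p : ℝ≥0∞} (hp : 1 ≤ p) :
    eLpNorm f p μ ≤ eLpNorm f p ν + eLpNorm (fun z => f z.1 - f z.2) p (μ.prod ν) := by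
  have hfst : AEStronglyMeasurable (fun z : α × α => f z.1) (μ.prod ν) := hμ.comp_fst
  have hsnd : AEStronglyMeasurable (fun z : α × α => f z.2) (μ.prod ν) := hν.comp_snd
  calc eLpNorm f p μ = eLpNorm (fun z : α × α => f z.1) p (μ.prod ν) :=
        (eLpNorm_comp_measurePreserving hμ measurePreserving_fst).symm
    _ = eLpNorm ((fun z : α × α => f z.2) + fun z => f z.1 - f z.2) p (μ.prod ν) := by
        congr 1
        ext z
        simp
    _ ≤ eLpNorm (fun z : α × α => f z.2) p (μ.prod ν)
          + eLpNorm (fun z => f z.1 - f z.2) p (μ.prod ν) :=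
        eLpNorm_add_le hsnd (hfst.sub hsnd) hp
    _ = _ := by
        congr 1
        exact eLpNorm_comp_measurePreserving hν measurePreserving_snd

theorem periodic_setLIntegral_Ioc_eq {F : ℝ → ℝ≥0∞} {T : ℝ} (hF : Function.Periodic F T)
    (hT : 0 < T) (a b : ℝ) : ∫⁻ u in Ioc a (a + T), F u = ∫⁻ u in Ioc b (b + T), F u := by
  have : VAddInvariantMeasure (AddSubgroup.zmultiples T) ℝ volume :=
    ⟨fun c s _ => measure_preimage_add _ _ _⟩
  exact (isAddFundamentalDomain_Ioc hT a).setLIntegral_eq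
    (isAddFundamentalDomain_Ioc hT b) F hF.map_vadd_zmultiples

theorem isProbabilityMeasure_cond_Ioc (u : ℝ) {r : ℝ} (hr : 0 < r) :
    IsProbabilityMeasure (volume[|Ioc u (u + r)]) :=
  ProbabilityTheory.cond_isProbabilityMeasure_of_finite (by simpa using hr) (by simp)

theorem ae_tendsto_setLAverage_Ioc {f : ℝ → ℝ≥0∞} (hf : AEMeasurable f)
    (hfin : ∫⁻ x, f x ≠ ⊤) :
    ∀ᵐ u, Tendsto (fun r => ⨍⁻ x in Ioc u (u + r), f x ∂volume) (𝓝[>] 0) (𝓝 (f u)) := by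
  filter_upwards [(IsUnifLocDoublingMeasure.vitaliFamily
    (volume : Measure ℝ) 1).ae_tendsto_lintegral_div hf hfin] with u hu
  have hright : Tendsto (fun r : ℝ => u + r) (𝓝[>] 0) (𝓝[>] u) := by
    refine tendsto_nhdsWithin_iff.2 ⟨?_, ?_⟩
    · exact ((continuous_const_add u).tendsto' 0 u (add_zero u)).mono_left nhdsWithin_le_nhds
    · filter_upwards [self_mem_nhdsWithin] with r hr using lt_add_of_pos_right u hr
  refine (hu.comp ((Real.tendsto_Icc_vitaliFamily_right u).comp hright)).congr fun r => ?_
  rw [setLAverage_congr Ioc_ae_eq_Icc, setLAverage_eq]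
  rfl

end ProbabilityAverages

section Gagliardo

variable {E : Type*} [NormedAddCommGroup E] {s : ℝ} {f g : ℝ → E}

/-- Lebesgue measure on the fundamental domain `(0,1]` of `ℝ/ℤ`. -/
abbrev periodMeasure : Measure ℝ := volume.restrict (Ioc 0 1)

/-- The measure `|w|^{-(1+2s)} du dw` on `(ℝ/ℤ) × (-1/2,1/2)`, for which the Gagliardo seminorm of
`f` is the `L²` norm of `increment f`. -/
def gagliardoMeasure (s : ℝ) : Measure (ℝ × ℝ) :=
  periodMeasure.prod ((volume.restrict (Ioo (-(1 : ℝ) / 2) (1 / 2))).withDensity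
    fun w => ENNReal.ofReal (|w| ^ (1 + 2 * s))⁻¹)

/-- The increment `(u, w) ↦ f (u + w) - f u`. -/
def increment (f : ℝ → E) (p : ℝ × ℝ) : E := f (p.1 + p.2) - f p.1

theorem increment_sub (f g : ℝ → E) : increment (f - g) = increment f - increment g := by
  ext p
  simp only [increment, Pi.sub_apply]
  abel

theorem norm_increment_norm_le (f : ℝ → E) (p : ℝ × ℝ) :
    ‖increment (fun u => ‖f u‖) p‖ ≤ ‖increment f p‖ :=
  abs_norm_sub_norm_le _ _

theorem gagliardoMeasure_absolutelyContinuous (s : ℝ) : gagliardoMeasure s ≪ volume :=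
  Measure.absolutelyContinuous_restrict.prod
    ((withDensity_absolutelyContinuous _ _).trans Measure.absolutelyContinuous_restrict)

theorem aestronglyMeasurable_increment (hf : AEStronglyMeasurable f volume) (s : ℝ) :
    AEStronglyMeasurable (increment f) (gagliardoMeasure s) := by
  have hadd : AEStronglyMeasurable (fun p : ℝ × ℝ => f (p.1 + p.2)) volume :=
    hf.comp_quasiMeasurePreserving (Measure.quasiMeasurePreserving_snd.comp
      (measurePreserving_prod_add volume volume).quasiMeasurePreserving)
  exact (hadd.sub hf.comp_fst).mono_ac (gagliardoMeasure_absolutelyContinuous s)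

theorem gagliardoSq_eq_lintegral_enorm (s : ℝ) (f : ℝ → E) :
    gagliardoSq s f = ∫⁻ u in Ioc (0 : ℝ) 1, ∫⁻ w in Ioo (-(1 : ℝ) / 2) (1 / 2),
      ENNReal.ofReal (|w| ^ (1 + 2 * s))⁻¹ * ‖f (u + w) - f u‖ₑ ^ 2 := by
  simp only [gagliardoSq, ← ofReal_norm, ← ENNReal.ofReal_pow (norm_nonneg _)]
  refine lintegral_congr fun u => lintegral_congr fun w => ?_
  rw [← ENNReal.ofReal_mul (by positivity), div_eq_inv_mul]

theorem eLpNorm_increment_sq (hf : AEStronglyMeasurable f volume) (s : ℝ) :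
    eLpNorm (increment f) 2 (gagliardoMeasure s) ^ 2 = gagliardoSq s f := by
  have hmeas := (aestronglyMeasurable_increment hf s).enorm.pow_const 2
  rw [gagliardoMeasure] at hmeas
  rw [eLpNorm_two_sq, gagliardoMeasure, lintegral_prod _ hmeas, gagliardoSq_eq_lintegral_enorm]
  refine lintegral_congr fun u => ?_
  rw [lintegral_withDensity_eq_lintegral_mul_non_measurable _ (by fun_prop)
    (.of_forall fun _ => ENNReal.ofReal_lt_top)]
  rfl

theorem memHs0_iff : MemHs0 s f ↔ Function.Periodic f 1 ∧ AEStronglyMeasurable f volume ∧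
    MemLp f 2 periodMeasure ∧ MemLp (increment f) 2 (gagliardoMeasure s) := by
  rw [MemHs0, MemL2per, and_assoc, and_assoc]
  refine and_congr_right fun _ => and_congr_right fun hf => and_congr ?_ ?_
  · exact (memLp_two_iff_integrable_sq_norm hf.restrict).symm
  · rw [MemLp, and_iff_right (aestronglyMeasurable_increment hf s), ← eLpNorm_increment_sq hf]
    exact ENNReal.pow_lt_top_iff.trans (or_iff_left two_ne_zero)

theorem Hs0Norm_eq_toReal_add_toReal (hf : AEStronglyMeasurable f volume) (s : ℝ) :
    Hs0Norm s f = (eLpNorm f 2 periodMeasure).toReal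
      + (eLpNorm (increment f) 2 (gagliardoMeasure s)).toReal := by
  rw [Hs0Norm, sqrt_integral_norm_sq hf.restrict, ← eLpNorm_increment_sq hf, ENNReal.toReal_pow,
    Real.sqrt_sq ENNReal.toReal_nonneg]

theorem Hs0Norm_nonneg (s : ℝ) (f : ℝ → E) : 0 ≤ Hs0Norm s f :=
  add_nonneg (Real.sqrt_nonneg _) (Real.sqrt_nonneg _)

theorem MemHs0.ofReal_Hs0Norm (hf : MemHs0 s f) : ENNReal.ofReal (Hs0Norm s f) =
    eLpNorm f 2 periodMeasure + eLpNorm (increment f) 2 (gagliardoMeasure s) := by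
  obtain ⟨-, hmeas, hL2, hinc⟩ := memHs0_iff.1 hf
  rw [Hs0Norm_eq_toReal_add_toReal hmeas, ENNReal.ofReal_add ENNReal.toReal_nonneg
    ENNReal.toReal_nonneg, ENNReal.ofReal_toReal hL2.2.ne, ENNReal.ofReal_toReal hinc.2.ne]

theorem MemHs0.sub (hf : MemHs0 s f) (hg : MemHs0 s g) : MemHs0 s (f - g) := by
  rw [memHs0_iff] at hf hg ⊢
  obtain ⟨hf_per, hf_meas, hf_L2, hf_inc⟩ := hf
  obtain ⟨hg_per, hg_meas, hg_L2, hg_inc⟩ := hg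
  exact ⟨hf_per.sub hg_per, hf_meas.sub hg_meas, hf_L2.sub hg_L2,
    increment_sub f g ▸ hf_inc.sub hg_inc⟩

theorem MemHs0.norm (hf : MemHs0 s f) : MemHs0 s (fun u => ‖f u‖) := by
  rw [memHs0_iff] at hf ⊢
  obtain ⟨hper, hmeas, hL2, hinc⟩ := hf
  exact ⟨hper.comp _, hmeas.norm, hL2.norm,
    hinc.of_le (aestronglyMeasurable_increment hmeas.norm s)
      (.of_forall (norm_increment_norm_le f))⟩

end Gagliardo

section SobolevEmbedding

open scoped ProbabilityTheory

variable {E : Type*} [NormedAddCommGroup E] {s : ℝ} {f : ℝ → E}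

theorem gagliardoSq_eq_setLIntegral_Ioc (hper : Function.Periodic f 1) (s a : ℝ) :
    gagliardoSq s f = ∫⁻ u in Ioc a (a + 1), ∫⁻ w in Ioo (-(1 : ℝ) / 2) (1 / 2),
      ENNReal.ofReal (|w| ^ (1 + 2 * s))⁻¹ * ‖f (u + w) - f u‖ₑ ^ 2 := by
  have hinner : Function.Periodic (fun u => ∫⁻ w in Ioo (-(1 : ℝ) / 2) (1 / 2),
      ENNReal.ofReal (|w| ^ (1 + 2 * s))⁻¹ * ‖f (u + w) - f u‖ₑ ^ 2) 1 := fun u => by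
    simp only [hper u, add_right_comm u 1, hper (u + _)]
  rw [gagliardoSq_eq_lintegral_enorm, periodic_setLIntegral_Ioc_eq hinner one_pos a 0, zero_add]

theorem enorm_sub_sq_le_rpow_mul {r w : ℝ} (hs : 0 ≤ 1 + 2 * s) (hw : |w| < r) (u : ℝ) :
    ‖f (u + w) - f u‖ₑ ^ 2 ≤ ENNReal.ofReal (r ^ (1 + 2 * s)) *
      (ENNReal.ofReal (|w| ^ (1 + 2 * s))⁻¹ * ‖f (u + w) - f u‖ₑ ^ 2) := by
  rcases eq_or_ne w 0 with rfl | hw0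
  · simp
  rw [← mul_assoc, ← ENNReal.ofReal_mul (by have := (abs_nonneg w).trans_lt hw; positivity)]
  refine le_mul_of_one_le_left' (ENNReal.one_le_ofReal.2 ?_)
  rw [← div_eq_mul_inv, one_le_div (by positivity)]
  gcongr

theorem setLIntegral_setLIntegral_enorm_sub_sq_le (hs : 0 ≤ 1 + 2 * s)
    (hper : Function.Periodic f 1) (u : ℝ) {r : ℝ} (hr : r ≤ 1 / 2) :
    ∫⁻ x in Ioc u (u + r), ∫⁻ y in Ioc u (u + r), ‖f x - f y‖ₑ ^ 2 ≤
      ENNReal.ofReal (r ^ (1 + 2 * s)) * gagliardoSq s f := by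
  rw [gagliardoSq_eq_setLIntegral_Ioc hper s u, ← lintegral_const_mul' _ _ ENNReal.ofReal_ne_top]
  refine (setLIntegral_mono' measurableSet_Ioc fun x hx => ?_).trans
    (lintegral_mono_set (Ioc_subset_Ioc_right (by linarith)))
  rw [← lintegral_const_mul' _ _ ENNReal.ofReal_ne_top, ← lintegral_indicator measurableSet_Ioc,
    ← lintegral_indicator measurableSet_Ioo, ← lintegral_add_left_eq_self _ x]
  refine lintegral_mono fun w => indicator_apply_le' (fun hw => ?_) fun _ => zero_le
  have hwr : |w| < r := abs_lt.2 ⟨by linarith [hx.2, hw.1], by linarith [hx.1, hw.2]⟩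
  have hw_mem : w ∈ Ioo (-(1 : ℝ) / 2) (1 / 2) := by
    rw [neg_div]
    exact abs_lt.1 (hwr.trans_le hr)
  rw [indicator_of_mem hw_mem, ← edist_eq_enorm_sub, edist_comm, edist_eq_enorm_sub]
  exact enorm_sub_sq_le_rpow_mul hs hwr x

theorem eLpNorm_prod_cond_sub_le (hf : AEStronglyMeasurable f volume)
    (hs : 0 ≤ 1 + 2 * s) (hper : Function.Periodic f 1) (u : ℝ) {r : ℝ} (hr0 : 0 < r)
    (hr : r ≤ 1 / 2) :
    eLpNorm (fun z : ℝ × ℝ => f z.1 - f z.2) 2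
        ((volume[|Ioc u (u + r / 2)]).prod (volume[|Ioc u (u + r)])) ≤
      ENNReal.ofReal (2 * r ^ (s - 1 / 2)) * eLpNorm (increment f) 2 (gagliardoMeasure s) := by
  have hac (v : ℝ) : volume[|Ioc u v] ≪ (volume : Measure ℝ) :=
    ProbabilityTheory.cond_absolutelyContinuous
  have := isProbabilityMeasure_cond_Ioc u hr0
  have hmeas : AEMeasurable (fun z : ℝ × ℝ => ‖f z.1 - f z.2‖ₑ ^ 2)
      ((volume[|Ioc u (u + r / 2)]).prod (volume[|Ioc u (u + r)])) :=
    ((hf.mono_ac (hac _)).comp_fst.sub (hf.mono_ac (hac _)).comp_snd).enorm.pow_const 2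
  have hpow : r ^ (1 + 2 * s) = r ^ 2 * (r ^ (s - 1 / 2)) ^ 2 := by
    rw [← Real.rpow_natCast, ← Real.rpow_natCast, ← Real.rpow_mul hr0.le, ← Real.rpow_add hr0]
    congr 1
    push_cast
    ring
  refine (ENNReal.pow_le_pow_left_iff two_ne_zero).1 ?_
  rw [mul_pow, eLpNorm_increment_sq hf, eLpNorm_two_sq, lintegral_prod _ hmeas]
  simp only [ProbabilityTheory.cond, lintegral_smul_measure, Real.volume_Ioc, add_sub_cancel_left,
    smul_eq_mul]
  rw [lintegral_const_mul' _ _ (by simpa using hr0)]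
  calc _ ≤ (ENNReal.ofReal (r / 2))⁻¹ * ((ENNReal.ofReal r)⁻¹ *
        (ENNReal.ofReal (r ^ (1 + 2 * s)) * gagliardoSq s f)) := by
        gcongr
        exact (lintegral_mono_set (Ioc_subset_Ioc_right (by linarith))).trans
          (setLIntegral_setLIntegral_enorm_sub_sq_le hs hper u hr)
    _ = ENNReal.ofReal ((r / 2)⁻¹ * r⁻¹ * r ^ (1 + 2 * s)) * gagliardoSq s f := by
        rw [← ENNReal.ofReal_inv_of_pos hr0, ← ENNReal.ofReal_inv_of_pos (half_pos hr0),
          ← mul_assoc, ← mul_assoc, ← ENNReal.ofReal_mul (by positivity),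
          ← ENNReal.ofReal_mul (by positivity)]
    _ ≤ ENNReal.ofReal (2 * r ^ (s - 1 / 2)) ^ 2 * gagliardoSq s f := by
        rw [← ENNReal.ofReal_pow (by positivity), hpow]
        gcongr
        field_simp
        norm_num

theorem eLpNorm_cond_half_le_add (hf : AEStronglyMeasurable f volume)
    (hs : 0 ≤ 1 + 2 * s) (hper : Function.Periodic f 1) (u : ℝ) {r : ℝ} (hr0 : 0 < r)
    (hr : r ≤ 1 / 2) :
    eLpNorm f 2 (volume[|Ioc u (u + r / 2)]) ≤ eLpNorm f 2 (volume[|Ioc u (u + r)])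
      + ENNReal.ofReal (2 * r ^ (s - 1 / 2)) * eLpNorm (increment f) 2 (gagliardoMeasure s) := by
  have := isProbabilityMeasure_cond_Ioc u hr0
  have := isProbabilityMeasure_cond_Ioc u (half_pos hr0)
  refine (eLpNorm_le_eLpNorm_add_eLpNorm_prod_sub
    (μ := volume[|Ioc u (u + r / 2)]) (ν := volume[|Ioc u (u + r)])
    (hf.mono_ac ProbabilityTheory.cond_absolutelyContinuous)
    (hf.mono_ac ProbabilityTheory.cond_absolutelyContinuous) one_le_two).trans ?_
  gcongr
  exact eLpNorm_prod_cond_sub_le hf hs hper u hr0 hr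

theorem eLpNorm_cond_Ioc_half_le (hper : Function.Periodic f 1) (u : ℝ) :
    eLpNorm f 2 (volume[|Ioc u (u + 1 / 2)]) ≤ 2 * eLpNorm f 2 periodMeasure := by
  refine (ENNReal.pow_le_pow_left_iff two_ne_zero).1 ?_
  have hper_sq : Function.Periodic (fun x => ‖f x‖ₑ ^ 2) 1 := fun x => by simp only [hper x]
  have hvol : (volume (Ioc u (u + 1 / 2)))⁻¹ = 2 := by
    rw [Real.volume_Ioc, add_sub_cancel_left, ← ENNReal.ofReal_inv_of_pos (by norm_num)]
    norm_num
  rw [mul_pow, eLpNorm_two_sq, eLpNorm_two_sq, ProbabilityTheory.cond, lintegral_smul_measure,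
    smul_eq_mul, hvol]
  calc 2 * ∫⁻ x in Ioc u (u + 1 / 2), ‖f x‖ₑ ^ 2
      ≤ 2 ^ 2 * ∫⁻ x in Ioc u (u + 1), ‖f x‖ₑ ^ 2 := by
        gcongr
        · norm_num
        · norm_num
    _ = 2 ^ 2 * ∫⁻ x in Ioc 0 1, ‖f x‖ₑ ^ 2 := by
        rw [periodic_setLIntegral_Ioc_eq hper_sq one_pos u 0, zero_add]

/-- The constant of the embedding `H^{s,2}(ℝ/ℤ) ⊆ L^∞` for `s > 1/2`: twice the sum of the geometric
series of ratio `2^{-(s-1/2)}`. -/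
def sobolevConst (s : ℝ) : ℝ := 2 * ∑' j : ℕ, ((1 / 2 : ℝ) ^ (s - 1 / 2)) ^ j

theorem two_mul_geom_sum_le_sobolevConst (hs : 1 / 2 < s) (k : ℕ) :
    2 * ∑ j ∈ Finset.range k, ((1 / 2 : ℝ) ^ (s - 1 / 2)) ^ j ≤ sobolevConst s := by
  have hratio : (1 / 2 : ℝ) ^ (s - 1 / 2) < 1 :=
    Real.rpow_lt_one (by norm_num) (by norm_num) (sub_pos.2 hs)
  exact mul_le_mul_of_nonneg_left ((summable_geometric_of_lt_one (by positivity)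
    hratio).sum_le_tsum _ fun _ _ => by positivity) zero_le_two

theorem sobolevConst_nonneg (s : ℝ) : 0 ≤ sobolevConst s :=
  mul_nonneg zero_le_two (tsum_nonneg fun _ => by positivity)

theorem MemHs0.eLpNorm_cond_dyadic_le_geom_sum (hs : 0 ≤ 1 + 2 * s) (hf : MemHs0 s f) (u : ℝ)
    (k : ℕ) :
    eLpNorm f 2 (volume[|Ioc u (u + (1 / 2) ^ (k + 1))]) ≤
      ENNReal.ofReal ((2 * ∑ j ∈ Finset.range (k + 1), ((1 / 2 : ℝ) ^ (s - 1 / 2)) ^ j)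
        * Hs0Norm s f) := by
  have hnorm := hf.ofReal_Hs0Norm
  obtain ⟨hper, hmeas, -, -⟩ := memHs0_iff.1 hf
  induction k with
  | zero =>
    rw [ENNReal.ofReal_mul (by positivity), hnorm]
    simpa using (eLpNorm_cond_Ioc_half_le hper u).trans (mul_le_mul_right le_self_add 2)
  | succ k ih =>
    have hr : (1 / 2 : ℝ) ^ (k + 1) ≤ 1 / 2 :=
      pow_le_of_le_one (by norm_num) (by norm_num) k.succ_ne_zero
    have hstep := eLpNorm_cond_half_le_add hmeas hs hper u (by positivity) hr
    have hhalf : (1 / 2 : ℝ) ^ (k + 1) / 2 = (1 / 2) ^ (k + 1 + 1) := by ring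
    have hrpow : ((1 / 2 : ℝ) ^ (k + 1)) ^ (s - 1 / 2) = ((1 / 2) ^ (s - 1 / 2)) ^ (k + 1) :=
      (Real.rpow_pow_comm one_half_pos.le _ _).symm
    rw [hhalf, hrpow] at hstep
    rw [Finset.sum_range_succ, mul_add, add_mul,
      ENNReal.ofReal_add (mul_nonneg (by positivity) (Hs0Norm_nonneg s f))
        (mul_nonneg (by positivity) (Hs0Norm_nonneg s f))]
    refine hstep.trans (add_le_add ih ?_)
    rw [ENNReal.ofReal_mul (p := 2 * _) (by positivity), hnorm]
    gcongr
    exact le_add_self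

theorem MemHs0.setLAverage_dyadic_enorm_sq_le (hs : 1 / 2 < s) (hf : MemHs0 s f) (u : ℝ)
    (k : ℕ) :
    ⨍⁻ x in Ioc u (u + (1 / 2) ^ (k + 1)), ‖f x‖ₑ ^ 2 ∂volume ≤
      ENNReal.ofReal (sobolevConst s * Hs0Norm s f) ^ 2 := by
  rw [setLAverage_eq', ← ProbabilityTheory.cond, ← eLpNorm_two_sq]
  gcongr
  refine (hf.eLpNorm_cond_dyadic_le_geom_sum (by linarith) u k).trans
    (ENNReal.ofReal_le_ofReal ?_)
  exact mul_le_mul_of_nonneg_right (two_mul_geom_sum_le_sobolevConst hs _) (Hs0Norm_nonneg s f)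

theorem MemHs0.ae_norm_le (hs : 1 / 2 < s) (hf : MemHs0 s f) :
    ∀ᵐ u ∂periodMeasure, ‖f u‖ ≤ sobolevConst s * Hs0Norm s f := by
  obtain ⟨-, hmeas, hL2, -⟩ := memHs0_iff.1 hf
  have hbound_nonneg := mul_nonneg (sobolevConst_nonneg s) (Hs0Norm_nonneg s f)
  have hfin : ∫⁻ x, (Ioc (0 : ℝ) 1).indicator (fun x => ‖f x‖ₑ ^ 2) x ≠ ⊤ := by
    rw [lintegral_indicator measurableSet_Ioc, ← eLpNorm_two_sq]
    exact ENNReal.pow_ne_top hL2.2.ne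
  have hdyadic : Tendsto (fun k : ℕ => (1 / 2 : ℝ) ^ (k + 1)) atTop (𝓝[>] 0) :=
    tendsto_nhdsWithin_iff.2 ⟨(tendsto_pow_atTop_nhds_zero_of_lt_one (by norm_num)
      (by norm_num)).comp (tendsto_add_atTop_nat 1), .of_forall fun k => by simp⟩
  rw [ae_restrict_iff' measurableSet_Ioc]
  filter_upwards [ae_tendsto_setLAverage_Ioc
    ((hmeas.enorm.pow_const 2).indicator measurableSet_Ioc) hfin] with u hu hu_mem
  rw [indicator_of_mem hu_mem] at hu
  have hsq : ‖f u‖ₑ ^ 2 ≤ ENNReal.ofReal (sobolevConst s * Hs0Norm s f) ^ 2 :=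
    le_of_tendsto (hu.comp hdyadic) <| .of_forall fun k =>
      (laverage_mono_ae (.of_forall (indicator_le_self _ _))).trans
        (hf.setLAverage_dyadic_enorm_sq_le hs u k)
  rwa [ENNReal.pow_le_pow_left_iff two_ne_zero, ← ofReal_norm,
    ENNReal.ofReal_le_ofReal_iff hbound_nonneg] at hsq

end SobolevEmbedding

section NormLipschitz

variable {V : Type*} [NormedAddCommGroup V] [InnerProductSpace ℝ V]

/-- A substitute for the gradient of the norm between `a` and `b`: the discrete gradient with
`‖a‖ - ‖b‖ = ⟪a - b, meanDirection a b⟫`. It is `0` when `a = b = 0`. -/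
def meanDirection (a b : V) : V := (‖a‖ + ‖b‖)⁻¹ • (a + b)

theorem norm_add_norm_smul_meanDirection (a b : V) :
    (‖a‖ + ‖b‖) • meanDirection a b = a + b := by
  rcases eq_or_ne (‖a‖ + ‖b‖) 0 with h0 | h0
  · obtain ⟨ha, hb⟩ := (add_eq_zero_iff_of_nonneg (norm_nonneg a) (norm_nonneg b)).1 h0
    simp [norm_eq_zero.1 ha, norm_eq_zero.1 hb]
  · exact smul_inv_smul₀ h0 _

theorem norm_meanDirection_le_one (a b : V) : ‖meanDirection a b‖ ≤ 1 := by
  rw [meanDirection, norm_smul, norm_inv, Real.norm_of_nonneg (by positivity), inv_mul_eq_div]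
  exact div_le_one_of_le₀ (norm_add_le a b) (by positivity)

theorem inner_sub_meanDirection (a b : V) : ⟪a - b, meanDirection a b⟫ = ‖a‖ - ‖b‖ := by
  rcases eq_or_ne (‖a‖ + ‖b‖) 0 with h0 | h0
  · obtain ⟨ha, hb⟩ := (add_eq_zero_iff_of_nonneg (norm_nonneg a) (norm_nonneg b)).1 h0
    simp [norm_eq_zero.1 ha, norm_eq_zero.1 hb]
  · refine mul_left_cancel₀ h0 ?_
    rw [← real_inner_smul_right, norm_add_norm_smul_meanDirection, inner_sub_left, inner_add_right,
      inner_add_right, real_inner_self_eq_norm_sq, real_inner_self_eq_norm_sq, real_inner_comm a b]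
    ring

theorem norm_add_norm_mul_norm_meanDirection_sub_le (x y x' y' : V) :
    (‖x‖ + ‖y‖) * ‖meanDirection x' y' - meanDirection x y‖ ≤
      2 * (‖x' - x‖ + ‖y' - y‖) := by
  have hdecomp : (‖x‖ + ‖y‖) • (meanDirection x' y' - meanDirection x y) =
      ((x' - x) + (y' - y)) + ((‖x‖ - ‖x'‖) + (‖y‖ - ‖y'‖)) • meanDirection x' y' := by
    have hscalar : (‖x‖ - ‖x'‖) + (‖y‖ - ‖y'‖) = (‖x‖ + ‖y‖) - (‖x'‖ + ‖y'‖) := by ring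
    rw [hscalar, smul_sub, sub_smul, norm_add_norm_smul_meanDirection,
      norm_add_norm_smul_meanDirection]
    abel
  have hscalar_le : |(‖x‖ - ‖x'‖) + (‖y‖ - ‖y'‖)| ≤ ‖x' - x‖ + ‖y' - y‖ := by
    rw [norm_sub_rev x', norm_sub_rev y']
    exact (abs_add_le _ _).trans
      (add_le_add (abs_norm_sub_norm_le x x') (abs_norm_sub_norm_le y y'))
  calc (‖x‖ + ‖y‖) * ‖meanDirection x' y' - meanDirection x y‖
      = ‖(‖x‖ + ‖y‖) • (meanDirection x' y' - meanDirection x y)‖ := by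
        rw [norm_smul, Real.norm_of_nonneg (by positivity)]
    _ ≤ ‖(x' - x) + (y' - y)‖
          + |(‖x‖ - ‖x'‖) + (‖y‖ - ‖y'‖)| * ‖meanDirection x' y'‖ := by
        rw [hdecomp, ← Real.norm_eq_abs, ← norm_smul]
        exact norm_add_le _ _
    _ ≤ (‖x' - x‖ + ‖y' - y‖) + (‖x' - x‖ + ‖y' - y‖) * 1 := by
        gcongr
        · exact norm_add_le _ _
        · exact norm_meanDirection_le_one x' y'
    _ = 2 * (‖x' - x‖ + ‖y' - y‖) := by ring

theorem abs_norm_sub_norm_sub_le {K : ℝ} (hK : 0 ≤ K) {x y : V}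
    (hxy : 2 * ‖x - y‖ ≤ K * (‖x‖ + ‖y‖)) (x' y' : V) :
    |(‖x'‖ - ‖y'‖) - (‖x‖ - ‖y‖)| ≤
      ‖(x' - y') - (x - y)‖ + K * (‖x' - x‖ + ‖y' - y‖) := by
  have hdecomp : (‖x'‖ - ‖y'‖) - (‖x‖ - ‖y‖) = ⟪(x' - y') - (x - y), meanDirection x' y'⟫
      + ⟪x - y, meanDirection x' y' - meanDirection x y⟫ := by
    rw [← inner_sub_meanDirection x' y', ← inner_sub_meanDirection x y, inner_sub_left (x' - y'),
      inner_sub_right]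
    ring
  have hfirst : |⟪(x' - y') - (x - y), meanDirection x' y'⟫| ≤ ‖(x' - y') - (x - y)‖ :=
    (abs_real_inner_le_norm _ _).trans
      (mul_le_of_le_one_right (norm_nonneg _) (norm_meanDirection_le_one x' y'))
  have hsecond : |⟪x - y, meanDirection x' y' - meanDirection x y⟫| ≤
      K * (‖x' - x‖ + ‖y' - y‖) := by
    refine (abs_real_inner_le_norm _ _).trans ?_
    have hleft := mul_le_mul_of_nonneg_right hxy
      (norm_nonneg (meanDirection x' y' - meanDirection x y))
    have hright := mul_le_mul_of_nonneg_left
      (norm_add_norm_mul_norm_meanDirection_sub_le x y x' y') hK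
    linarith
  rw [hdecomp]
  exact (abs_add_le _ _).trans (add_le_add hfirst hsecond)

variable {s K : ℝ} {f g : ℝ → V}

theorem eLpNorm_increment_norm_sub_norm_le (hf : AEStronglyMeasurable f volume)
    (hg : AEStronglyMeasurable g volume) (hK : 0 ≤ K)
    (hfg : ∀ᵐ u ∂periodMeasure, 2 * ‖f u - g u‖ ≤ K * (‖f u‖ + ‖g u‖)) :
    eLpNorm (increment ((fun u => ‖f u‖) - fun u => ‖g u‖)) 2 (gagliardoMeasure s) ≤
      eLpNorm (increment (f - g)) 2 (gagliardoMeasure s) + ENNReal.ofReal K *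
        (eLpNorm (increment f) 2 (gagliardoMeasure s)
          + eLpNorm (increment g) 2 (gagliardoMeasure s)) := by
  have hf_inc := (aestronglyMeasurable_increment hf s).norm
  have hg_inc := (aestronglyMeasurable_increment hg s).norm
  have hsub_inc := (aestronglyMeasurable_increment (hf.sub hg) s).norm
  have hpointwise : ∀ᵐ p ∂gagliardoMeasure s,
      ‖increment ((fun u => ‖f u‖) - fun u => ‖g u‖) p‖ ≤
        ‖increment (f - g) p‖ + K * (‖increment f p‖ + ‖increment g p‖) := by
    filter_upwards [Measure.quasiMeasurePreserving_fst.ae hfg] with p hp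
    exact abs_norm_sub_norm_sub_le hK hp _ _
  refine (eLpNorm_mono_ae_real hpointwise).trans
    ((eLpNorm_add_le hsub_inc ((hf_inc.add hg_inc).const_mul K) one_le_two).trans ?_)
  rw [eLpNorm_norm]
  gcongr
  refine (eLpNorm_const_smul_le (c := K)).trans ?_
  rw [Real.enorm_of_nonneg hK]
  gcongr
  refine (eLpNorm_add_le hf_inc hg_inc one_le_two).trans_eq ?_
  rw [eLpNorm_norm, eLpNorm_norm]

theorem MemHs0.Hs0Norm_norm_sub_norm_le (hf : MemHs0 s f) (hg : MemHs0 s g) (hK : 0 ≤ K)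
    (hfg : ∀ᵐ u ∂periodMeasure, 2 * ‖f u - g u‖ ≤ K * (‖f u‖ + ‖g u‖)) :
    Hs0Norm s ((fun u => ‖f u‖) - fun u => ‖g u‖) ≤
      Hs0Norm s (f - g) + K * (Hs0Norm s f + Hs0Norm s g) := by
  have hnorms := hf.norm.sub hg.norm
  have hf_meas := (memHs0_iff.1 hf).2.1
  have hg_meas := (memHs0_iff.1 hg).2.1
  have hL2 : eLpNorm ((fun u => ‖f u‖) - fun u => ‖g u‖) 2 periodMeasure ≤
      eLpNorm (f - g) 2 periodMeasure :=
    eLpNorm_mono fun u => abs_norm_sub_norm_le (f u) (g u)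
  have hnonneg := mul_nonneg hK (add_nonneg (Hs0Norm_nonneg s f) (Hs0Norm_nonneg s g))
  rw [← ENNReal.ofReal_le_ofReal_iff (add_nonneg (Hs0Norm_nonneg _ _) hnonneg),
    ENNReal.ofReal_add (Hs0Norm_nonneg _ _) hnonneg, ENNReal.ofReal_mul hK,
    ENNReal.ofReal_add (Hs0Norm_nonneg _ _) (Hs0Norm_nonneg _ _), hnorms.ofReal_Hs0Norm,
    (hf.sub hg).ofReal_Hs0Norm, hf.ofReal_Hs0Norm, hg.ofReal_Hs0Norm, add_assoc]
  refine add_le_add hL2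
    ((eLpNorm_increment_norm_sub_norm_le hf_meas hg_meas hK hfg).trans ?_)
  gcongr <;> exact le_add_self

theorem statement19_general {c M : ℝ} (hs : 1 / 2 < s) (hc : 0 < c) (hf : MemHs0 s f)
    (hg : MemHs0 s g) (hfg : ∀ᵐ u ∂periodMeasure, c ≤ ‖f u‖ + ‖g u‖)
    (hfM : Hs0Norm s f ≤ M) (hgM : Hs0Norm s g ≤ M) :
    MemHs0 s (fun u => ‖f u‖) ∧ MemHs0 s (fun u => ‖g u‖) ∧
      Hs0Norm s ((fun u => ‖f u‖) - fun u => ‖g u‖) ≤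
        (1 + 4 * sobolevConst s * M / c) * Hs0Norm s (f - g) := by
  refine ⟨hf.norm, hg.norm, ?_⟩
  set K := 2 * (sobolevConst s * Hs0Norm s (f - g)) / c with hK_def
  have hK : 0 ≤ K := div_nonneg (mul_nonneg zero_le_two
    (mul_nonneg (sobolevConst_nonneg s) (Hs0Norm_nonneg _ _))) hc.le
  have hdiff : ∀ᵐ u ∂periodMeasure, 2 * ‖f u - g u‖ ≤ K * (‖f u‖ + ‖g u‖) := by
    filter_upwards [(hf.sub hg).ae_norm_le hs, hfg] with u hsup hlower
    calc 2 * ‖f u - g u‖ ≤ 2 * (sobolevConst s * Hs0Norm s (f - g)) :=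
          mul_le_mul_of_nonneg_left hsup zero_le_two
      _ = K * c := (div_mul_cancel₀ _ hc.ne').symm
      _ ≤ K * (‖f u‖ + ‖g u‖) := mul_le_mul_of_nonneg_left hlower hK
  calc Hs0Norm s ((fun u => ‖f u‖) - fun u => ‖g u‖)
      ≤ Hs0Norm s (f - g) + K * (Hs0Norm s f + Hs0Norm s g) :=
        hf.Hs0Norm_norm_sub_norm_le hg hK hdiff
    _ ≤ Hs0Norm s (f - g) + K * (M + M) := by gcongr
    _ = (1 + 4 * sobolevConst s * M / c) * Hs0Norm s (f - g) := by
        rw [hK_def]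
        ring

end NormLipschitz

/-- For `s ∈ (1/2,1)`, `c > 0`, `M > 0` there is `C = C(s,c,M,n)` such that
for all `f, g ∈ H^{s,2}(ℝ/ℤ,ℝⁿ)` with `|f|, |g| ≥ c` pointwise and norms at most `M`, the
scalar functions `|f|, |g|` belong to `H^{s,2}(ℝ/ℤ,ℝ)` and
`‖|f| − |g|‖_{H^{s,2}} ≤ C ‖f − g‖_{H^{s,2}}`. -/
theorem statement19 {n : ℕ} (hn : 1 ≤ n) {s c M : ℝ} (hs : s ∈ Ioo (1/2 : ℝ) 1)
    (hc : 0 < c) (hM : 0 < M) :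
    ∃ C : ℝ, ∀ f g : ℝ → Rn n,
      MemHs0 s f → MemHs0 s g →
      (∀ u : ℝ, c ≤ ‖f u‖) → (∀ u : ℝ, c ≤ ‖g u‖) →
      Hs0Norm s f ≤ M → Hs0Norm s g ≤ M →
      MemHs0 s (fun u : ℝ => ‖f u‖) ∧ MemHs0 s (fun u : ℝ => ‖g u‖) ∧
      Hs0Norm s ((fun u : ℝ => ‖f u‖) - fun u : ℝ => ‖g u‖) ≤ C * Hs0Norm s (f - g) := by
  refine ⟨1 + 4 * sobolevConst s * M / (2 * c), fun f g hf hg hfc hgc hfM hgM => ?_⟩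
  exact statement19_general hs.1 (by positivity) hf hg
    (.of_forall fun u => by linarith [hfc u, hgc u]) hfM hgM

end
end
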